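/- arXiv:math/0308201 — 8 statements merged into one kernel-verified Lean document; each statement's English description precedes it below -/
import Mathlib

section
/- Let Φ be a finite reduced irreducible root system with base Π and positive roots Φ⁺, and let Π_L be a proper subset of Π. Put Φ_L⁺ = Φ⁺ ∩ span(Π_L) and γ = (1/2)·Σ_{α ∈ Φ⁺ \ Φ_L⁺} α^∨. Then ⟨β, γ⟩ = 0 for every β ∈ Π_L, and ⟨λ, γ⟩ > 0 for every nonzero dominant vector λ in the span of Φ. -/
open Classical

/-!
Let `B` be the canonical Weyl-invariant form on the span of the roots, so that
`⟨x, α^∨⟩ = 2 B(α, x) / B(α, α)`. Then `⟨x, γ⟩ = B(v, x)` for `v = Σ α / B(α, α)`, the sum running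
over `Φ⁺ \ Φ_L⁺`. A simple reflection in `Π_L` permutes `Φ⁺ \ Φ_L⁺`, so `γ` vanishes on `Π_L`.

The coordinates of `v` in the base are nonnegative, and positive outside `Π_L`. If the coordinate at
`β` vanishes, then `β ∈ Π_L` and `⟨v, β^∨⟩ = 0`; since distinct simple roots make obtuse angles, `β`
is orthogonal to every simple root occurring in `v`. By irreducibility all coordinates of `v` are
positive. For dominant `λ ≠ 0` the numbers `B(δ, λ)`, `δ ∈ Π`, are nonnegative, and not all zero
because `B` is positive definite, whence `⟨λ, γ⟩ = B(v, λ) > 0`.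
-/

open Module

lemma two_mul_rootForm_root_left {ι R M N : Type*} [Fintype ι] [CommRing R]
    [AddCommGroup M] [Module R M] [AddCommGroup N] [Module R N]
    (P : RootPairing ι R M N) (i : ι) (x : M) :
    2 * P.RootForm (P.root i) x = P.RootForm (P.root i) (P.root i) * P.coroot' i x := by
  have h := congrArg (P.toLinearMap x) (P.rootForm_self_smul_coroot i)
  rw [map_smul, map_nsmul, P.toLinearMap_apply_apply_Polarization, nsmul_eq_mul, smul_eq_mul] at h
  exact h.symm

section SimpleSystem

variable {ι κ K M N : Type*} [Field K] [LinearOrder K]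
  [AddCommGroup M] [Module K M] [AddCommGroup N] [Module K N]

/-- A base of a root pairing, indexed by `κ`: simple roots forming a basis of the ambient space, in
which the coordinates of each root have constant sign. In contrast to `RootPairing.Base`, the
coordinates are arbitrary scalars and nothing is required of the coroots. -/
structure SimpleSystem (P : RootPairing ι K M N) (κ : Type*) where
  basis : Basis κ K M
  index : κ → ι
  root_index (k : κ) : P.root (index k) = basis k
  repr_nonneg_or_nonpos (i : ι) : 0 ≤ basis.repr (P.root i) ∨ basis.repr (P.root i) ≤ 0

namespace SimpleSystem

lemma finite [Finite ι] {P : RootPairing ι K M N} (b : SimpleSystem P κ) : Finite κ :=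
  Finite.of_injective b.index fun k l h => b.basis.injective <| by
    rw [← b.root_index, h, b.root_index]

variable {P : RootPairing ι K M N} (b : SimpleSystem P κ)

/-- The simple roots do not split into two nonempty mutually orthogonal subsets. -/
def IsIrreducible : Prop :=
  ∀ s : Set κ, (∀ k ∈ s, ∀ l ∉ s, P.IsOrthogonal (b.index k) (b.index l)) →
    s = ∅ ∨ s = Set.univ

lemma repr_reflection_of_ne (x : M) {k l : κ} (h : k ≠ l) :
    b.basis.repr (P.reflection (b.index l) x) k = b.basis.repr x k := by
  simp [P.reflection_apply, b.root_index, h.symm]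

lemma repr_root_nonneg_of_pos {i : ι} {k : κ} (h : 0 < b.basis.repr (P.root i) k) :
    0 ≤ b.basis.repr (P.root i) :=
  (b.repr_nonneg_or_nonpos i).resolve_right fun h' => (h' k).not_gt h

section Nilradical

variable [Fintype ι]

/-- The set `Φ⁺ \ Φ_L⁺` of positive roots outside the span of the simple roots in `L`, that is, the
roots of the nilradical of the standard parabolic subalgebra with Levi factor given by `L`. -/
noncomputable def nilradicalRoots (L : Set κ) : Finset ι :=
  {i | 0 ≤ b.basis.repr (P.root i) ∧ P.root i ∉ Submodule.span K (b.basis '' L)}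

/-- The coweight `γ`, half the sum of the coroots of the nilradical. -/
noncomputable def nilradicalCoweight (L : Set κ) : N :=
  (1 / 2 : K) • ∑ i ∈ b.nilradicalRoots L, P.coroot i

/-- The vector representing `b.nilradicalCoweight L` through the canonical form `P.RootForm`; see
`rootForm_nilradicalVector`. -/
noncomputable def nilradicalVector (L : Set κ) : M :=
  ∑ i ∈ b.nilradicalRoots L, (P.RootForm (P.root i) (P.root i))⁻¹ • P.root i

variable {L : Set κ}

lemma mem_nilradicalRoots {i : ι} : i ∈ b.nilradicalRoots L ↔
    0 ≤ b.basis.repr (P.root i) ∧ ∃ k ∉ L, 0 < b.basis.repr (P.root i) k := by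
  simp only [nilradicalRoots, Finset.mem_filter, Finset.mem_univ, true_and, b.basis.mem_span_image,
    Set.not_subset, Finset.mem_coe, Finsupp.mem_support_iff]
  refine and_congr_right fun h => exists_congr fun k => ?_
  exact and_comm.trans (and_congr_right fun _ => (h k).lt_iff_ne'.symm)

lemma reflectionPerm_mem_nilradicalRoots {l : κ} (hl : l ∈ L) {i : ι}
    (hi : i ∈ b.nilradicalRoots L) :
    P.reflectionPerm (b.index l) i ∈ b.nilradicalRoots L := by
  obtain ⟨-, k, hk, hpos⟩ := b.mem_nilradicalRoots.1 hi
  rw [← b.repr_reflection_of_ne _ (ne_of_mem_of_not_mem hl hk).symm,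
    ← P.root_reflectionPerm] at hpos
  exact b.mem_nilradicalRoots.2 ⟨b.repr_root_nonneg_of_pos hpos, k, hk, hpos⟩

lemma repr_nilradicalVector (k : κ) : b.basis.repr (b.nilradicalVector L) k =
    ∑ i ∈ b.nilradicalRoots L,
      (P.RootForm (P.root i) (P.root i))⁻¹ * b.basis.repr (P.root i) k := by
  simp [nilradicalVector, Finsupp.finsetSum_apply]

end Nilradical

variable [IsStrictOrderedRing K]

lemma pairing_index_nonpos {k l : κ} (h : k ≠ l) :
    P.pairing (b.index k) (b.index l) ≤ 0 := by
  have hpos : 0 < b.basis.repr (P.root (P.reflectionPerm (b.index l) (b.index k))) k := by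
    simp [P.root_reflectionPerm, b.repr_reflection_of_ne _ h, b.root_index]
  have hl := b.repr_root_nonneg_of_pos hpos l
  rw [P.root_reflectionPerm, P.reflection_apply_root] at hl
  simpa [b.root_index, h] using hl

lemma isOrthogonal_of_repr_eq_zero [Finite ι] {v : M}
    (hnonneg : ∀ k, 0 ≤ b.basis.repr v k) {k l : κ} (hk : b.basis.repr v k = 0)
    (hcoroot : 0 ≤ P.coroot' (b.index k) v) (hl : b.basis.repr v l ≠ 0) :
    P.IsOrthogonal (b.index k) (b.index l) := by
  have := b.finite
  have := Fintype.ofFinite κ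
  have hexpand : P.coroot' (b.index k) v =
      ∑ j, b.basis.repr v j * P.pairing (b.index j) (b.index k) := by
    conv_lhs => rw [← b.basis.sum_repr v, map_sum]
    simp only [map_smul, smul_eq_mul, ← b.root_index, P.root_coroot'_eq_pairing]
  have hterm : ∀ j ∈ Finset.univ,
      b.basis.repr v j * P.pairing (b.index j) (b.index k) ≤ 0 := by
    intro j _
    obtain rfl | hjk := eq_or_ne j k
    · rw [hk, zero_mul]
    · exact mul_nonpos_of_nonneg_of_nonpos (hnonneg j) (b.pairing_index_nonpos hjk)
  have hsum := le_antisymm (Finset.sum_nonpos hterm) (hexpand ▸ hcoroot)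
  have hlk := (Finset.sum_eq_zero_iff_of_nonpos hterm).1 hsum l (Finset.mem_univ l)
  exact P.isOrthogonal_iff_pairing_eq_zero.2 <|
    P.pairing_eq_zero_iff.1 ((mul_eq_zero.1 hlk).resolve_left hl)

lemma repr_pos_of_nonneg [Finite ι] (hb : b.IsIrreducible) {v : M} (hv : v ≠ 0)
    (hnonneg : ∀ k, 0 ≤ b.basis.repr v k)
    (hcoroot : ∀ k, b.basis.repr v k = 0 → 0 ≤ P.coroot' (b.index k) v) (k : κ) :
    0 < b.basis.repr v k := by
  refine (hnonneg k).lt_of_ne' fun hk => ?_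
  rcases hb {k | b.basis.repr v k = 0} fun k hk l hl =>
    b.isOrthogonal_of_repr_eq_zero hnonneg hk (hcoroot k hk) hl with hempty | huniv
  · exact Set.eq_empty_iff_forall_notMem.1 hempty k hk
  · exact hv (b.basis.ext_elem fun l => by simpa using Set.eq_univ_iff_forall.1 huniv l)

section RootForm

variable [Fintype ι]

lemma rootForm_pos_of_repr_pos {v x : M} (hv : ∀ k, 0 < b.basis.repr v k)
    (hx : x ≠ 0) (hdom : ∀ k, 0 ≤ P.coroot' (b.index k) x) : 0 < P.RootForm v x := by
  have := b.finite
  have := Fintype.ofFinite κ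
  have hexpand (y : M) :
      P.RootForm y x = ∑ k, b.basis.repr y k * P.RootForm (b.basis k) x := by
    conv_lhs => rw [← b.basis.sum_repr y, map_sum, LinearMap.sum_apply]
    simp only [map_smul, LinearMap.smul_apply, smul_eq_mul]
  have hnonneg (k : κ) : 0 ≤ P.RootForm (b.basis k) x := by
    have h := mul_nonneg (P.zero_le_rootForm (P.root (b.index k))) (hdom k)
    rw [← two_mul_rootForm_root_left, b.root_index] at h
    exact nonneg_of_mul_nonneg_right h two_pos
  obtain ⟨k, hk⟩ : ∃ k, P.RootForm (b.basis k) x ≠ 0 := by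
    by_contra! h
    have hspan : x ∈ P.rootSpan K := by
      rw [← b.basis.sum_repr x]
      refine Submodule.sum_mem _ fun k _ => Submodule.smul_mem _ _ ?_
      exact b.root_index k ▸ Submodule.subset_span ⟨_, rfl⟩
    exact (P.rootForm_pos_of_ne_zero hspan hx).ne' (by simp [hexpand x, h])
  rw [hexpand]
  exact Finset.sum_pos' (fun k _ => mul_nonneg (hv k).le (hnonneg k))
    ⟨k, Finset.mem_univ k, mul_pos (hv k) ((hnonneg k).lt_of_ne' hk)⟩

variable {L : Set κ}

lemma index_mem_nilradicalRoots {k : κ} (hk : k ∉ L) : b.index k ∈ b.nilradicalRoots L := by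
  have hpos : 0 < b.basis.repr (P.root (b.index k)) k := by simp [b.root_index]
  exact b.mem_nilradicalRoots.2 ⟨b.repr_root_nonneg_of_pos hpos, k, hk, hpos⟩

lemma toLinearMap_root_index_nilradicalCoweight {l : κ} (hl : l ∈ L) :
    P.toLinearMap (P.root (b.index l)) (b.nilradicalCoweight L) = 0 := by
  have hsum : ∑ i ∈ b.nilradicalRoots L, P.pairing (b.index l) i =
      ∑ i ∈ b.nilradicalRoots L, -P.pairing (b.index l) i := by
    refine Finset.sum_bij' (fun i _ => P.reflectionPerm (b.index l) i)
      (fun i _ => P.reflectionPerm (b.index l) i)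
      (fun _ => b.reflectionPerm_mem_nilradicalRoots hl)
      (fun _ => b.reflectionPerm_mem_nilradicalRoots hl)
      (fun i _ => P.reflectionPerm_self _ i) (fun i _ => P.reflectionPerm_self _ i) fun i _ => ?_
    rw [P.pairing_reflectionPerm, P.pairing_reflectionPerm_self_left, neg_neg]
  rw [Finset.sum_neg_distrib, self_eq_neg] at hsum
  rw [nilradicalCoweight, map_smul, map_sum]
  simp only [P.root_coroot_eq_pairing, hsum, smul_zero]

lemma rootForm_nilradicalVector (x : M) :
    P.RootForm (b.nilradicalVector L) x = P.toLinearMap x (b.nilradicalCoweight L) := by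
  simp only [nilradicalVector, nilradicalCoweight, map_sum, map_smul, LinearMap.sum_apply,
    LinearMap.smul_apply, Finset.smul_sum, smul_eq_mul]
  refine Finset.sum_congr rfl fun i _ => ?_
  have hne : P.RootForm (P.root i) (P.root i) ≠ 0 := P.toInvariantForm.ne_zero i
  have h := two_mul_rootForm_root_left P i x
  field_simp
  simpa [mul_comm] using h

lemma repr_nilradicalVector_term_nonneg {i : ι} (hi : i ∈ b.nilradicalRoots L) (k : κ) :
    0 ≤ (P.RootForm (P.root i) (P.root i))⁻¹ * b.basis.repr (P.root i) k :=
  mul_nonneg (inv_nonneg.2 (P.zero_le_rootForm _)) ((b.mem_nilradicalRoots.1 hi).1 k)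

lemma repr_nilradicalVector_nonneg (k : κ) : 0 ≤ b.basis.repr (b.nilradicalVector L) k := by
  rw [repr_nilradicalVector]
  exact Finset.sum_nonneg fun i hi => b.repr_nilradicalVector_term_nonneg hi k

lemma repr_nilradicalVector_pos_of_notMem {k : κ} (hk : k ∉ L) :
    0 < b.basis.repr (b.nilradicalVector L) k := by
  rw [repr_nilradicalVector]
  refine Finset.sum_pos' (fun i hi => b.repr_nilradicalVector_term_nonneg hi k)
    ⟨b.index k, b.index_mem_nilradicalRoots hk, mul_pos (inv_pos.2 ?_) (by simp [b.root_index])⟩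
  exact P.rootForm_pos_of_ne_zero (Submodule.subset_span ⟨_, rfl⟩) (P.ne_zero _)

lemma repr_nilradicalVector_pos (hb : b.IsIrreducible) (hL : L ≠ Set.univ) (k : κ) :
    0 < b.basis.repr (b.nilradicalVector L) k := by
  obtain ⟨l, hl⟩ := (Set.ne_univ_iff_exists_notMem L).1 hL
  have hne : b.nilradicalVector L ≠ 0 := fun h => by
    simpa [h] using b.repr_nilradicalVector_pos_of_notMem hl
  refine b.repr_pos_of_nonneg hb hne b.repr_nilradicalVector_nonneg (fun k hk => ?_) k
  have hkL : k ∈ L := by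
    by_contra h
    exact (b.repr_nilradicalVector_pos_of_notMem h).ne' hk
  have hform : P.RootForm (P.root (b.index k)) (b.nilradicalVector L) = 0 := by
    rw [← P.rootForm_symmetric.eq, RingHom.id_apply, rootForm_nilradicalVector,
      b.toLinearMap_root_index_nilradicalCoweight hkL]
  have h := two_mul_rootForm_root_left P (b.index k) (b.nilradicalVector L)
  rw [hform, mul_zero, eq_comm, mul_eq_zero] at h
  exact (h.resolve_left (P.toInvariantForm.ne_zero _)).ge

theorem toLinearMap_nilradicalCoweight_pos (hb : b.IsIrreducible)
    (hL : L ≠ Set.univ) {x : M} (hx : x ≠ 0) (hdom : ∀ k, 0 ≤ P.coroot' (b.index k) x) :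
    0 < P.toLinearMap x (b.nilradicalCoweight L) := by
  rw [← rootForm_nilradicalVector]
  exact b.rootForm_pos_of_repr_pos (b.repr_nilradicalVector_pos hb hL) hx hdom

end RootForm

end SimpleSystem

end SimpleSystem

lemma coroot_injective_of_mapsTo_preReflection {ι R M : Type*} [Finite ι] [CommRing R]
    [IsDomain R] [CharZero R] [AddCommGroup M] [Module R M] [IsTorsionFree R M] {root : ι ↪ M}
    {coroot : ι → Dual R M}
    (htwo : ∀ i, coroot i (root i) = 2)
    (hmaps : ∀ i, Set.MapsTo (preReflection (root i) (coroot i)) (Set.range root)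
      (Set.range root)) : Function.Injective coroot := by
  have : IsAddTorsionFree M := .of_isTorsionFree R M
  intro i j hij
  exact root.injective <| eq_of_mapsTo_reflection_of_mem (Set.finite_range root) (htwo i) (htwo j)
    (hij ▸ htwo i) (hij ▸ htwo j) (hmaps i) (hmaps j) ⟨j, rfl⟩

lemma span_eq_span_of_subset_of_eq_sum {R M : Type*} [Semiring R] [AddCommMonoid M] [Module R M]
    {s t : Finset M} (hst : s ⊆ t) (h : ∀ x ∈ t, ∃ c : s → R, x = ∑ a : s, c a • (a : M)) :
    Submodule.span R (s : Set M) = Submodule.span R (t : Set M) := by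
  refine le_antisymm (Submodule.span_mono hst) (Submodule.span_le.2 fun x hx => ?_)
  obtain ⟨c, rfl⟩ := h x hx
  exact Submodule.sum_mem _ fun a _ => Submodule.smul_mem _ _ (Submodule.subset_span a.2)

section Span

variable {K V : Type*} [Field K] [AddCommGroup V] [Module K V]
  {Φ : Finset V} {coroot : V → Dual K V}

/-- The root pairing between the span of `Φ` and its dual, for a finite set `Φ` of vectors with
coroots given by linear forms on the whole space. -/
noncomputable def spanRootPairing [CharZero K] (hpair2 : ∀ α ∈ Φ, coroot α α = 2)
    (hrefl : ∀ α ∈ Φ, ∀ β ∈ Φ, β - coroot α β • α ∈ Φ) :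
    RootPairing Φ K (Submodule.span K (Φ : Set V)) (Dual K (Submodule.span K (Φ : Set V))) :=
  let root : Φ ↪ Submodule.span K (Φ : Set V) :=
    Subtype.impEmbedding (· ∈ Φ) _ fun _ hα => Submodule.subset_span hα
  let corootSpan : Φ → Dual K (Submodule.span K (Φ : Set V)) :=
    fun α => (coroot α).domRestrict (Submodule.span K (Φ : Set V))
  have htwo (α : Φ) : corootSpan α (root α) = 2 := hpair2 α α.2
  have hmaps (α : Φ) : Set.MapsTo (preReflection (root α) (corootSpan α))
      (Set.range root) (Set.range root) := by
    rintro - ⟨β, rfl⟩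
    exact ⟨⟨_, hrefl α α.2 β β.2⟩, rfl⟩
  have hspan : Submodule.span K (Set.range root) = ⊤ := by
    convert Submodule.span_span_coe_preimage (R := K) (s := (Φ : Set V))
    ext x
    exact ⟨by rintro ⟨α, rfl⟩; exact α.2, fun hx => ⟨⟨x, hx⟩, rfl⟩⟩
  RootPairing.mk'' (Dual.eval K _) root
    ⟨corootSpan, coroot_injective_of_mapsTo_preReflection htwo hmaps⟩ htwo hmaps hspan

variable {Δ : Finset V}

/-- A linearly independent set `Δ` with the same span as `Φ`, as a basis of that span. -/
noncomputable def spanBasis (hind : LinearIndependent K (fun δ : Δ => (δ : V)))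
    (hspan : Submodule.span K (Δ : Set V) = Submodule.span K (Φ : Set V)) :
    Basis Δ K (Submodule.span K (Φ : Set V)) :=
  (Basis.span hind).map <| LinearEquiv.ofEq _ _ <| by simpa using hspan

@[simp]
lemma coe_spanBasis (hind : LinearIndependent K (fun δ : Δ => (δ : V)))
    (hspan : Submodule.span K (Δ : Set V) = Submodule.span K (Φ : Set V)) (δ : Δ) :
    (spanBasis hind hspan δ : V) = δ := by
  simp [spanBasis, Basis.span_apply]

lemma coe_eq_sum_smul_iff_repr_spanBasis
    (hind : LinearIndependent K (fun δ : Δ => (δ : V)))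
    (hspan : Submodule.span K (Δ : Set V) = Submodule.span K (Φ : Set V))
    (x : Submodule.span K (Φ : Set V)) (c : Δ → K) :
    (x : V) = ∑ δ, c δ • (δ : V) ↔ ⇑((spanBasis hind hspan).repr x) = c := by
  rw [← (spanBasis hind hspan).equivFun_apply, ← LinearEquiv.eq_symm_apply,
    Basis.equivFun_symm_apply, Subtype.ext_iff]
  simp

lemma repr_spanBasis_nonneg_iff [PartialOrder K]
    (hind : LinearIndependent K (fun δ : Δ => (δ : V)))
    (hspan : Submodule.span K (Δ : Set V) = Submodule.span K (Φ : Set V))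
    (x : Submodule.span K (Φ : Set V)) :
    0 ≤ (spanBasis hind hspan).repr x ↔
      ∃ c : Δ → K, (∀ δ, 0 ≤ c δ) ∧ (x : V) = ∑ δ, c δ • (δ : V) := by
  simp only [coe_eq_sum_smul_iff_repr_spanBasis hind hspan, exists_eq_right']
  rfl

variable [LinearOrder K] [IsStrictOrderedRing K]
  (hpair2 : ∀ α ∈ Φ, coroot α α = 2) (hrefl : ∀ α ∈ Φ, ∀ β ∈ Φ, β - coroot α β • α ∈ Φ)
  (hΔΦ : Δ ⊆ Φ) (hind : LinearIndependent K (fun δ : Δ => (δ : V)))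
  (hbase : ∀ β ∈ Φ, ∃ c : Δ → K, ((∀ δ, 0 ≤ c δ) ∨ (∀ δ, c δ ≤ 0)) ∧
    β = ∑ δ : Δ, c δ • (δ : V))

/-- A base `Δ ⊆ Φ`, as a simple system of the root pairing on the span of `Φ`. -/
noncomputable def spanSimpleSystem : SimpleSystem (spanRootPairing hpair2 hrefl) Δ where
  basis := spanBasis hind <|
    span_eq_span_of_subset_of_eq_sum hΔΦ fun β hβ => (hbase β hβ).imp fun _ => And.right
  index δ := ⟨δ, hΔΦ δ.2⟩
  root_index δ := Subtype.ext (coe_spanBasis hind _ δ).symm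
  repr_nonneg_or_nonpos β := by
    obtain ⟨c, hc, hβ⟩ := hbase β β.2
    have hrepr := (coe_eq_sum_smul_iff_repr_spanBasis hind
      (span_eq_span_of_subset_of_eq_sum hΔΦ fun β hβ => (hbase β hβ).imp fun _ => And.right)
      ((spanRootPairing hpair2 hrefl).root β) c).1 hβ
    rw [← Finsupp.coe_le_coe, ← Finsupp.coe_le_coe, hrepr]
    exact hc

lemma isIrreducible_spanSimpleSystem
    (hirr : ∀ s : Finset V, s ⊆ Δ →
      (∀ α ∈ s, ∀ β ∈ Δ, β ∉ s → coroot β α = 0 ∧ coroot α β = 0) → s = ∅ ∨ s = Δ) :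
    (spanSimpleSystem hpair2 hrefl hΔΦ hind hbase).IsIrreducible := by
  intro t ht
  let s : Finset V := t.toFinset.map (Function.Embedding.subtype (· ∈ Δ))
  have hmem {δ : Δ} : (δ : V) ∈ s ↔ δ ∈ t := by simp [s]
  refine (hirr s ?_ ?_).imp ?_ ?_
  · exact Finset.map_subtype_subset _
  · intro α hα β hβ hβt
    obtain ⟨δ, hδ, rfl⟩ := Finset.mem_map.1 hα
    exact ht δ (Set.mem_toFinset.1 hδ) ⟨β, hβ⟩ fun h => hβt (hmem.2 h)
  · simp [s]
  · intro h
    exact Set.eq_univ_of_forall fun δ => hmem.1 (h.ge δ.2)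

lemma span_eq_map_span_image_basis {ΔL : Finset V} (hL : ΔL ⊆ Δ) :
    Submodule.span K (ΔL : Set V) = (Submodule.span K
      ((spanSimpleSystem hpair2 hrefl hΔΦ hind hbase).basis '' {δ | (δ : V) ∈ ΔL})).map
        (Submodule.subtype _) := by
  rw [← Submodule.span_image, Set.image_image]
  congr 1
  ext x
  simpa [spanSimpleSystem] using @hL x

lemma mem_nilradicalRoots_spanSimpleSystem {ΔL : Finset V} (hL : ΔL ⊆ Δ) (β : Φ) :
    β ∈ (spanSimpleSystem hpair2 hrefl hΔΦ hind hbase).nilradicalRoots {δ | (δ : V) ∈ ΔL} ↔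
      (∃ c : Δ → K, (∀ δ, 0 ≤ c δ) ∧ (β : V) = ∑ δ : Δ, c δ • (δ : V)) ∧
        (β : V) ∉ Submodule.span K (ΔL : Set V) := by
  set b := spanSimpleSystem hpair2 hrefl hΔΦ hind hbase
  have hspan : (spanRootPairing hpair2 hrefl).root β ∈
      Submodule.span K (b.basis '' {δ | (δ : V) ∈ ΔL}) ↔
        (β : V) ∈ Submodule.span K (ΔL : Set V) := by
    rw [span_eq_map_span_image_basis hpair2 hrefl hΔΦ hind hbase hL]
    exact (Subtype.val_injective.mem_set_image).symm
  rw [SimpleSystem.nilradicalRoots, Finset.mem_filter_univ, hspan]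
  exact and_congr_left' <| repr_spanBasis_nonneg_iff hind
    (span_eq_span_of_subset_of_eq_sum hΔΦ fun β hβ => (hbase β hβ).imp fun _ => And.right) _

/-- The linear form `γ = (1/2)·Σ_{α ∈ Φ⁺ \ Φ_L⁺} α^∨` on the whole space, in terms of finite sets of
vectors; on the span of `Φ` it is `SimpleSystem.nilradicalCoweight`. -/
noncomputable def nilradicalHalfSum (Φ : Finset V) (coroot : V → Dual K V) (Δ ΔL : Finset V) :
    Dual K V :=
  (1 / 2 : K) • ∑ α ∈ Φ.filter (fun β =>
    (∃ c : Δ → K, (∀ δ, 0 ≤ c δ) ∧ β = ∑ δ : Δ, c δ • (δ : V)) ∧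
      β ∉ Submodule.span K (ΔL : Set V)), coroot α

lemma toLinearMap_nilradicalCoweight_spanSimpleSystem {ΔL : Finset V} (hL : ΔL ⊆ Δ)
    (x : Submodule.span K (Φ : Set V)) :
    (spanRootPairing hpair2 hrefl).toLinearMap x
      ((spanSimpleSystem hpair2 hrefl hΔΦ hind hbase).nilradicalCoweight {δ | (δ : V) ∈ ΔL}) =
    nilradicalHalfSum Φ coroot Δ ΔL x := by
  set b := spanSimpleSystem hpair2 hrefl hΔΦ hind hbase
  have hmap : Φ.filter (fun β =>
      (∃ c : Δ → K, (∀ δ, 0 ≤ c δ) ∧ β = ∑ δ : Δ, c δ • (δ : V)) ∧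
        β ∉ Submodule.span K (ΔL : Set V)) =
      (b.nilradicalRoots {δ | (δ : V) ∈ ΔL}).map (Function.Embedding.subtype _) := by
    ext β
    simp [b, mem_nilradicalRoots_spanSimpleSystem hpair2 hrefl hΔΦ hind hbase hL, and_comm,
      and_left_comm]
  rw [nilradicalHalfSum, hmap, Finset.sum_map, SimpleSystem.nilradicalCoweight, map_smul, map_sum,
    LinearMap.smul_apply, LinearMap.sum_apply]
  rfl

end Span

theorem stmt_2_general {K V : Type*} [Field K] [LinearOrder K] [IsStrictOrderedRing K]
    [AddCommGroup V] [Module K V] (Φ : Finset V) (coroot : V → Dual K V)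
    (hpair2 : ∀ α ∈ Φ, coroot α α = 2)
    (hrefl : ∀ α ∈ Φ, ∀ β ∈ Φ, β - coroot α β • α ∈ Φ)
    (Δ : Finset V) (hΔΦ : Δ ⊆ Φ) (hind : LinearIndependent K (fun δ : Δ => (δ : V)))
    (hbase : ∀ β ∈ Φ, ∃ c : Δ → K, ((∀ δ, 0 ≤ c δ) ∨ (∀ δ, c δ ≤ 0)) ∧
      β = ∑ δ : Δ, c δ • (δ : V))
    (hirr : ∀ s : Finset V, s ⊆ Δ →
      (∀ α ∈ s, ∀ β ∈ Δ, β ∉ s → coroot β α = 0 ∧ coroot α β = 0) → s = ∅ ∨ s = Δ)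
    (ΔL : Finset V) (hL : ΔL ⊆ Δ) (hLproper : ΔL ≠ Δ) :
    (∀ β ∈ ΔL, nilradicalHalfSum Φ coroot Δ ΔL β = 0) ∧
    (∀ lam : V, lam ∈ Submodule.span K (Φ : Set V) →
      (∀ α ∈ Δ, 0 ≤ coroot α lam) → lam ≠ 0 →
      0 < nilradicalHalfSum Φ coroot Δ ΔL lam) := by
  let b := spanSimpleSystem hpair2 hrefl hΔΦ hind hbase
  have hγ := toLinearMap_nilradicalCoweight_spanSimpleSystem hpair2 hrefl hΔΦ hind hbase hL
  refine ⟨fun β hβ => ?_, fun lam hlam hdom hne => ?_⟩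
  · have hzero := b.toLinearMap_root_index_nilradicalCoweight (L := {δ | (δ : V) ∈ ΔL})
      (l := ⟨β, hL hβ⟩) hβ
    exact (hγ _).symm.trans hzero
  · have hproper : {δ : Δ | (δ : V) ∈ ΔL} ≠ Set.univ := fun h =>
      hLproper (hL.antisymm fun δ hδ => Set.eq_univ_iff_forall.1 h ⟨δ, hδ⟩)
    rw [← hγ ⟨lam, hlam⟩]
    exact b.toLinearMap_nilradicalCoweight_pos
      (isIrreducible_spanSimpleSystem hpair2 hrefl hΔΦ hind hbase hirr) hproper
      (fun h => hne (congrArg Subtype.val h)) fun δ => hdom δ δ.2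

/-- Let `Φ` be a finite reduced irreducible root system with base `Δ` and positive
roots `Φ⁺` (the roots which are nonnegative combinations of `Δ`), and let `ΔL ⊊ Δ`.
With `Φ_L⁺ = Φ⁺ ∩ span ΔL` and `γ = (1/2)·Σ_{α ∈ Φ⁺ \ Φ_L⁺} α^∨`, one has
`⟨β, γ⟩ = 0` for every `β ∈ ΔL`, and `⟨lam, γ⟩ > 0` for every nonzero dominant
vector `lam` in the span of `Φ`. -/
theorem stmt_2 (V : Type*) [AddCommGroup V] [Module ℝ V] [FiniteDimensional ℝ V]
    (Φ : Finset V) (coroot : V → Module.Dual ℝ V)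
    -- root system axioms
    (h0 : (0 : V) ∉ Φ)
    (hpair2 : ∀ α ∈ Φ, coroot α α = 2)
    (hint : ∀ α ∈ Φ, ∀ β ∈ Φ, ∃ n : ℤ, coroot α β = (n : ℝ))
    (hrefl : ∀ α ∈ Φ, ∀ β ∈ Φ, β - (coroot α β) • α ∈ Φ)
    (hred : ∀ α ∈ Φ, ∀ c : ℝ, c • α ∈ Φ → c = 1 ∨ c = -1)
    -- `Δ` is a base of `Φ`
    (Δ : Finset V) (hΔΦ : Δ ⊆ Φ)
    (hind : LinearIndependent ℝ (fun α : Δ => (α : V)))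
    (hbase : ∀ β ∈ Φ, ∃ c : Δ → ℤ, ((∀ α, 0 ≤ c α) ∨ (∀ α, c α ≤ 0)) ∧
        (β : V) = ∑ α : Δ, (c α : ℝ) • (α : V))
    -- irreducibility
    (hirr : ∀ s : Finset V, s ⊆ Δ →
        (∀ α ∈ s, ∀ β ∈ Δ, β ∉ s → coroot β α = 0 ∧ coroot α β = 0) → s = ∅ ∨ s = Δ)
    -- `ΔL` is a proper subset of `Δ`
    (ΔL : Finset V) (hL : ΔL ⊆ Δ) (hLproper : ΔL ≠ Δ) :
    (∀ β ∈ ΔL,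
      ((1 / 2 : ℝ) • ∑ α ∈ Φ.filter (fun β' =>
          (∃ c : Δ → ℝ, (∀ α', 0 ≤ c α') ∧ β' = ∑ α' : Δ, c α' • (α' : V)) ∧
          β' ∉ Submodule.span ℝ (ΔL : Set V)), coroot α) β = 0) ∧
    (∀ lam : V, lam ∈ Submodule.span ℝ (Φ : Set V) →
      (∀ α ∈ Δ, 0 ≤ coroot α lam) → lam ≠ 0 →
      0 < ((1 / 2 : ℝ) • ∑ α ∈ Φ.filter (fun β' =>
          (∃ c : Δ → ℝ, (∀ α', 0 ≤ c α') ∧ β' = ∑ α' : Δ, c α' • (α' : V)) ∧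
          β' ∉ Submodule.span ℝ (ΔL : Set V)), coroot α) lam) :=
  stmt_2_general Φ coroot hpair2 hrefl Δ hΔΦ hind
    (fun β hβ => let ⟨c, hc, h⟩ := hbase β hβ
      ⟨fun α => c α, hc.imp (fun hc α => Int.cast_nonneg (hc α))
        fun hc α => Int.cast_nonpos.2 (hc α), h⟩)
    hirr ΔL hL hLproper
end

section
/- Let Φ be a finite reduced root system with base Π, and let Π_L, Π_Y ⊆ Π. Assume that for every α ∈ Π_Y there is a finite sequence α = β_0, β_1, …, β_s of elements of Π_Y with ⟨β_t, β_{t+1}^∨⟩ ≠ 0 for all t and with β_s ∉ Π_L (i.e., no connected component of Π_Y is contained in Π_L). Then there exist strictly positive rational numbers (c_α)_{α∈Π_Y} such that Σ_{α∈Π_Y} c_α ⟨β, α^∨⟩ ≤ 0 for every β ∈ Π_L. -/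
/-!
Weight `α ∈ Y` by `N⁻ᵈ`, where `d` is the length of a shortest chain of neighbors from `α` out of
`L`. For `β ∈ L` the only summand that can be positive is the one at `β` itself. If it occurs, let
`γ` be the first step of a shortest chain from `β`: the pairing of `β` with `γ^∨` is negative and
the weight of `γ` is at least `N` times that of `β`, so once `N` is large the summand at `γ`
outweighs the one at `β`.
-/

section Distance

variable {ι : Type*}

/-- The points from which some chain of exactly `n` steps of `r` ends in `E`. -/
def reachIn (r : ι → ι → Prop) (E : Set ι) : ℕ → Set ι
  | 0 => E
  | n + 1 => {a | ∃ b, r a b ∧ b ∈ reachIn r E n}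

/-- The distance to `E` in the directed graph `r`: the length of a shortest chain of steps of `r`
that ends in `E`, with junk value `0` where there is no such chain. -/
noncomputable def distTo (r : ι → ι → Prop) (E : Set ι) (a : ι) : ℕ :=
  sInf {n | a ∈ reachIn r E n}

variable {r : ι → ι → Prop} {E : Set ι} {a b : ι}

theorem exists_mem_reachIn_of_reflTransGen (h : Relation.ReflTransGen r a b) (hb : b ∈ E) :
    ∃ n, a ∈ reachIn r E n := by
  induction h using Relation.ReflTransGen.head_induction_on with
  | refl => exact ⟨0, hb⟩
  | head hstep _ ih =>
    obtain ⟨n, hn⟩ := ih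
    exact ⟨n + 1, _, hstep, hn⟩

theorem exists_rel_distTo_lt (h : Relation.ReflTransGen r a b) (hb : b ∈ E) (ha : a ∉ E) :
    ∃ c, r a c ∧ distTo r E c < distTo r E a := by
  have hmem : a ∈ reachIn r E (distTo r E a) :=
    Nat.sInf_mem (exists_mem_reachIn_of_reflTransGen h hb)
  cases hdist : distTo r E a with
  | zero =>
    rw [hdist] at hmem
    exact absurd hmem ha
  | succ n =>
    rw [hdist] at hmem
    obtain ⟨c, hac, hc⟩ := hmem
    exact ⟨c, hac, Nat.lt_succ_of_le (Nat.sInf_le hc)⟩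

end Distance

theorem exists_nat_forall_le_nsmul {ι M : Type*} [AddCommMonoid M] [LinearOrder M]
    [IsOrderedAddMonoid M] [Archimedean M] (s : Finset ι) (f g : ι → M)
    (hg : ∀ i ∈ s, 0 < g i) : ∃ N : ℕ, 0 < N ∧ ∀ i ∈ s, f i ≤ N • g i := by
  have hlocal : ∀ i, ∃ n : ℕ, i ∈ s → f i ≤ n • g i := fun i => by
    by_cases hi : i ∈ s
    · exact (Archimedean.arch (f i) (hg i hi)).imp fun _ hn _ => hn
    · exact ⟨0, fun h => absurd h hi⟩
  choose n hn using hlocal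
  refine ⟨s.sup n + 1, Nat.succ_pos _, fun i hi => (hn i hi).trans ?_⟩
  exact nsmul_le_nsmul_left (hg i hi).le (Nat.le_succ_of_le (Finset.le_sup hi))

theorem sum_nonpos_of_add_nonpos {ι M : Type*} [AddCommMonoid M] [Preorder M]
    [AddLeftMono M] {s : Finset ι} {f : ι → M} {i j : ι} (hi : i ∈ s) (hj : j ∈ s)
    (hij : i ≠ j) (hpair : f i + f j ≤ 0) (hf : ∀ k ∈ s, k ≠ i → k ≠ j → f k ≤ 0) :
    ∑ k ∈ s, f k ≤ 0 := by
  classical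
  calc ∑ k ∈ s, f k ≤ ∑ k ∈ {i, j}, f k :=
        Finset.sum_le_sum_of_subset_of_nonpos' (by grind) (by grind)
    _ = f i + f j := Finset.sum_pair hij
    _ ≤ 0 := hpair

theorem exists_nat_forall_diag_le_mul_neg {ι R : Type*} [Ring R] [LinearOrder R] [IsOrderedRing R]
    [Archimedean R] (A : Matrix ι ι R) (Y : Finset ι) :
    ∃ N : ℕ, 0 < N ∧ ∀ β ∈ Y, ∀ γ ∈ Y, A γ β < 0 → A β β ≤ N * -A γ β := by
  obtain ⟨N, hN, hle⟩ := exists_nat_forall_le_nsmul ((Y ×ˢ Y).filter fun p => A p.2 p.1 < 0)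
    (fun p => A p.1 p.1) (fun p => -A p.2 p.1)
    fun p hp => neg_pos.2 (Finset.mem_filter.1 hp).2
  refine ⟨N, hN, fun β hβ γ hγ hneg => ?_⟩
  simpa only [nsmul_eq_mul] using
    hle (β, γ) (Finset.mem_filter.2 ⟨Finset.mk_mem_product hβ hγ, hneg⟩)

theorem inv_pow_mul_le_inv_pow_mul {K : Type*} [Semifield K] [LinearOrder K]
    [IsStrictOrderedRing K] {N p q : K} {m n : ℕ} (hN : 1 ≤ N) (hq : 0 ≤ q)
    (hpq : p ≤ N * q) (hmn : m < n) : (N ^ n)⁻¹ * p ≤ (N ^ m)⁻¹ * q := by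
  have hN0 : 0 < N := one_pos.trans_le hN
  obtain ⟨k, rfl⟩ := Nat.exists_eq_add_one_of_ne_zero (Nat.ne_zero_of_lt hmn)
  calc (N ^ (k + 1))⁻¹ * p ≤ (N ^ (k + 1))⁻¹ * (N * q) := by gcongr
    _ = (N ^ k)⁻¹ * q := by
      rw [pow_succ, mul_inv, mul_assoc, inv_mul_cancel_left₀ hN0.ne']
    _ ≤ (N ^ m)⁻¹ * q := by gcongr; exact Nat.le_of_lt_succ hmn

section LinearOrderedField

variable {ι K : Type*} [Field K] [LinearOrder K] [IsStrictOrderedRing K]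

theorem sum_inv_pow_mul_nonpos {s : Finset ι} {f : ι → K} {d : ι → ℕ} {N : K} {i j : ι}
    (hN : 1 ≤ N) (hi : i ∈ s) (hj : j ∈ s) (hd : d j < d i) (hf : ∀ k ∈ s, k ≠ i → f k ≤ 0)
    (hdom : f i ≤ N * -f j) : ∑ k ∈ s, (N ^ d k)⁻¹ * f k ≤ 0 := by
  have hji : j ≠ i := fun h => hd.ne (congrArg d h)
  have hpair : (N ^ d i)⁻¹ * f i ≤ (N ^ d j)⁻¹ * -f j :=
    inv_pow_mul_le_inv_pow_mul hN (neg_nonneg.2 (hf j hj hji)) hdom hd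
  refine sum_nonpos_of_add_nonpos hi hj hji.symm (by linarith) fun k hk hki _ => ?_
  exact mul_nonpos_of_nonneg_of_nonpos (by positivity) (hf k hk hki)

theorem stmt_3_general [Archimedean K] {A : Matrix ι ι K} {L : Set ι} {Y : Finset ι}
    (hoff : ∀ α ∈ Y, ∀ β ∈ L, α ≠ β → A α β ≤ 0)
    (hconn : ∀ α ∈ Y, ∃ β,
      Relation.ReflTransGen (fun a b => b ∈ Y ∧ A b a ≠ 0) α β ∧ β ∉ L) :
    ∃ c : ι → ℚ, (∀ α ∈ Y, 0 < c α) ∧ ∀ β ∈ L, ∑ α ∈ Y, (c α : K) * A α β ≤ 0 := by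
  obtain ⟨N, hN, hdom⟩ := exists_nat_forall_diag_le_mul_neg A Y
  let d := distTo (fun a b => b ∈ Y ∧ A b a ≠ 0) Lᶜ
  refine ⟨fun α => ((N : ℚ) ^ d α)⁻¹, fun α _ => by positivity, fun β hβ => ?_⟩
  push_cast
  have hoffβ : ∀ α ∈ Y, α ≠ β → A α β ≤ 0 := fun α hα => hoff α hα β hβ
  by_cases hβY : β ∈ Y
  · obtain ⟨δ, hchain, hδ⟩ := hconn β hβY
    obtain ⟨γ, ⟨hγY, hγβ⟩, hlt⟩ := exists_rel_distTo_lt hchain hδ (Set.notMem_compl_iff.2 hβ)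
    have hneg : A γ β < 0 := (hoffβ γ hγY fun h => hlt.ne (congrArg d h)).lt_of_ne hγβ
    exact sum_inv_pow_mul_nonpos (Nat.one_le_cast.2 hN) hβY hγY hlt hoffβ
      (hdom β hβY γ hγY hneg)
  · refine Finset.sum_nonpos fun α hα => mul_nonpos_of_nonneg_of_nonpos (by positivity) ?_
    exact hoffβ α hα (ne_of_mem_of_not_mem hα hβY)

end LinearOrderedField

/-- Let `Δ` be the base of a finite reduced root system, with pairings
`⟨β, α^∨⟩ = coroot α β` (so `⟨α, α^∨⟩ = 2`, off-diagonal pairings of simple roots are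
nonpositive integers, with symmetric vanishing).  Let `ΔL, ΔY ⊆ Δ` and assume that no
connected component of `ΔY` (for the neighbor relation of the Dynkin diagram) is
contained in `ΔL`: from every `α ∈ ΔY` there is a chain of neighbors inside `ΔY`
ending outside `ΔL`.  Then there are strictly positive rationals `(c_α)_{α ∈ ΔY}`
with `Σ_{α ∈ ΔY} c_α ⟨β, α^∨⟩ ≤ 0` for every `β ∈ ΔL`. -/
theorem stmt_3 (V : Type*) [AddCommGroup V] [Module ℝ V] [FiniteDimensional ℝ V]
    (Δ : Finset V) (coroot : V → Module.Dual ℝ V)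
    (hpair2 : ∀ α ∈ Δ, coroot α α = 2)
    (hoffdiag : ∀ α ∈ Δ, ∀ β ∈ Δ, α ≠ β → coroot α β ≤ 0)
    (hint : ∀ α ∈ Δ, ∀ β ∈ Δ, ∃ n : ℤ, coroot α β = (n : ℝ))
    (hsymm : ∀ α ∈ Δ, ∀ β ∈ Δ, (coroot α β = 0 ↔ coroot β α = 0))
    (ΔL ΔY : Finset V) (hL : ΔL ⊆ Δ) (hY : ΔY ⊆ Δ)
    (hconn : ∀ α ∈ ΔY, ∃ β : V,
        Relation.ReflTransGen (fun a b => b ∈ ΔY ∧ coroot b a ≠ 0) α β ∧ β ∉ ΔL) :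
    ∃ c : V → ℚ, (∀ α ∈ ΔY, 0 < c α) ∧
      ∀ β ∈ ΔL, ∑ α ∈ ΔY, (c α : ℝ) * coroot α β ≤ 0 := by
  exact stmt_3_general (A := fun α β => coroot α β) (L := ΔL)
    (fun α hα β hβ => hoffdiag α (hY hα) β (hL hβ)) hconn
end

section
/- Let k be a field and 0 ≤ d ≤ n. Let (A₁, A₂) and (B₁, B₂) be pairs with A₁, B₁ ∈ Mat_{n×d}(k), A₂, B₂ ∈ Mat_{(n−d)×n}(k) satisfying A₂A₁ = 0 and B₂B₁ = 0. Then there exist g ∈ GL(n,k), h₁ ∈ GL(d,k), h₂ ∈ GL(n−d,k) with B₁ = g A₁ h₁⁻¹ and B₂ = h₂ A₂ g⁻¹ if and only if rank A₁ = rank B₁ and rank A₂ = rank B₂. -/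
open Matrix

/-!
Ranks are orbit invariants. Conversely, equal ranks and rank–nullity give two flags
`range A₁ ≤ ker A₂` and `range B₁ ≤ ker B₂` in `k^n` of equal dimensions, so some `g` carries the
first flag to the second. Then `g A₁` and `B₁` have the same range, hence differ by an automorphism
of `k^d`, and `A₂` and `B₂ g` have the same kernel, hence differ by an automorphism of `k^(n-d)`.
-/

section LinearMap

open Module

theorem finrank_range_eq_of_comp_eq {R M M' N N' : Type*} [Semiring R]
    [AddCommMonoid M] [Module R M] [AddCommMonoid M'] [Module R M']
    [AddCommMonoid N] [Module R N] [AddCommMonoid N'] [Module R N']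
    {f : M →ₗ[R] N} {f' : M' →ₗ[R] N'} {u : M ≃ₗ[R] M'} {v : N ≃ₗ[R] N'}
    (h : v.toLinearMap ∘ₗ f = f' ∘ₗ u.toLinearMap) :
    finrank R (LinearMap.range f) = finrank R (LinearMap.range f') := by
  rw [← LinearEquiv.finrank_map_eq v, ← LinearMap.range_comp, h, LinearEquiv.range_comp]

variable {K U V W : Type*} [DivisionRing K] [AddCommGroup U] [Module K U]
  [AddCommGroup V] [Module K V] [AddCommGroup W] [Module K W]

theorem exists_linearEquiv_restrict_eq_and_map_eq {p q : Submodule K V} [FiniteDimensional K p]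
    (s : p ≃ₗ[K] q) : ∃ e : V ≃ₗ[K] V, (∀ x : p, e x = s x) ∧ p.map e.toLinearMap = q := by
  obtain ⟨e, he⟩ := Submodule.exists_linearEquiv_restrict_eq s
  have restrict_eq : e.toLinearMap ∘ₗ p.subtype = q.subtype ∘ₗ s.toLinearMap :=
    LinearMap.ext fun x => (he x).symm
  refine ⟨e, fun x => (he x).symm, ?_⟩
  calc p.map e.toLinearMap
      = LinearMap.range (e.toLinearMap ∘ₗ p.subtype) := by
        rw [LinearMap.range_comp, Submodule.range_subtype]
    _ = q := by rw [restrict_eq, LinearEquiv.range_comp, Submodule.range_subtype]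

theorem nonempty_linearEquiv_of_isCompl {p p' q q' : Submodule K V} [FiniteDimensional K p]
    (h : IsCompl p q) (h' : IsCompl p' q') (s : p ≃ₗ[K] p') : Nonempty (q ≃ₗ[K] q') := by
  obtain ⟨e, -, map_e⟩ := exists_linearEquiv_restrict_eq_and_map_eq s
  exact ⟨(Submodule.quotientEquivOfIsCompl p q h).symm ≪≫ₗ
    Submodule.Quotient.equiv p p' e map_e ≪≫ₗ Submodule.quotientEquivOfIsCompl p' q' h'⟩

theorem exists_linearEquiv_map_eq_of_le {p q p' q' : Submodule K V}
    [FiniteDimensional K q] [FiniteDimensional K q'] (hle : p ≤ q) (hle' : p' ≤ q')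
    (hp : finrank K p = finrank K p') (hq : finrank K q = finrank K q') :
    ∃ e : V ≃ₗ[K] V, p.map e.toLinearMap = p' ∧ q.map e.toLinearMap = q' := by
  let s : q ≃ₗ[K] q' := LinearEquiv.ofFinrankEq q q' hq
  have finrank_eq :
      finrank K ((p.submoduleOf q).map s.toLinearMap) = finrank K (p'.submoduleOf q') := by
    rw [LinearEquiv.finrank_map_eq, (Submodule.submoduleOfEquivOfLe hle).finrank_eq, hp,
      (Submodule.submoduleOfEquivOfLe hle').finrank_eq]
  -- `s` ignores the smaller subspaces; `t` corrects it to match them.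
  obtain ⟨t, -, map_t⟩ :=
    exists_linearEquiv_restrict_eq_and_map_eq (LinearEquiv.ofFinrankEq _ _ finrank_eq)
  obtain ⟨e, e_eq, map_e⟩ := exists_linearEquiv_restrict_eq_and_map_eq (s ≪≫ₗ t)
  have restrict_eq :
      e.toLinearMap ∘ₗ q.subtype = q'.subtype ∘ₗ t.toLinearMap ∘ₗ s.toLinearMap :=
    LinearMap.ext e_eq
  refine ⟨e, ?_, map_e⟩
  calc p.map e.toLinearMap
      = (p.submoduleOf q).map (e.toLinearMap ∘ₗ q.subtype) := by
        rw [Submodule.map_comp, Submodule.submoduleOf, Submodule.map_comap_subtype,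
          inf_eq_right.2 hle]
    _ = (p'.submoduleOf q').map q'.subtype := by
        rw [restrict_eq, Submodule.map_comp, Submodule.map_comp, map_t]
    _ = p' := by rw [Submodule.submoduleOf, Submodule.map_comap_subtype, inf_eq_right.2 hle']

theorem exists_linearEquiv_comp_eq_of_ker_eq {f f' : V →ₗ[K] W}
    [FiniteDimensional K (LinearMap.range f)] (h : LinearMap.ker f = LinearMap.ker f') :
    ∃ e : W ≃ₗ[K] W, e.toLinearMap ∘ₗ f = f' := by
  obtain ⟨e, he⟩ := Submodule.exists_linearEquiv_restrict_eq
    (f.quotKerEquivRange.symm ≪≫ₗ Submodule.quotEquivOfEq _ _ h ≪≫ₗ f'.quotKerEquivRange)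
  refine ⟨e, LinearMap.ext fun v => ?_⟩
  simpa using (he ⟨f v, LinearMap.mem_range_self f v⟩).symm

theorem exists_linearEquiv_comp_eq_of_range_eq {f f' : U →ₗ[K] V}
    [FiniteDimensional K (LinearMap.range f)] (h : LinearMap.range f = LinearMap.range f') :
    ∃ e : U ≃ₗ[K] U, f' ∘ₗ e.toLinearMap = f := by
  obtain ⟨C, ker_compl⟩ := Submodule.exists_isCompl (LinearMap.ker f)
  obtain ⟨C', ker_compl'⟩ := Submodule.exists_isCompl (LinearMap.ker f')
  let c : C ≃ₗ[K] C' := f.kerComplementEquivRange ker_compl.symm ≪≫ₗ LinearEquiv.ofEq _ _ h ≪≫ₗ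
    (f'.kerComplementEquivRange ker_compl'.symm).symm
  have map_c (x : C) : f' (c x) = f x := by
    have apply_c : f'.kerComplementEquivRange ker_compl'.symm (c x) =
        LinearEquiv.ofEq _ _ h (f.kerComplementEquivRange ker_compl.symm x) :=
      LinearEquiv.apply_symm_apply _ _
    exact congrArg Subtype.val apply_c
  have : FiniteDimensional K C :=
    (f.kerComplementEquivRange ker_compl.symm).symm.finiteDimensional
  obtain ⟨s⟩ := nonempty_linearEquiv_of_isCompl ker_compl.symm ker_compl'.symm c
  let e := (C.prodEquivOfIsCompl _ ker_compl.symm).symm ≪≫ₗ c.prodCongr s ≪≫ₗ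
    C'.prodEquivOfIsCompl _ ker_compl'.symm
  refine ⟨e, LinearMap.ext fun u => ?_⟩
  obtain ⟨⟨x, y⟩, rfl⟩ := (C.prodEquivOfIsCompl _ ker_compl.symm).surjective u
  simp [e, map_c]

theorem exists_linearEquiv_comp_eq_iff_finrank_range_eq [FiniteDimensional K V]
    {f f' : U →ₗ[K] V} {g g' : V →ₗ[K] W} (hgf : g ∘ₗ f = 0) (hgf' : g' ∘ₗ f' = 0) :
    (∃ (v : V ≃ₗ[K] V) (u : U ≃ₗ[K] U) (w : W ≃ₗ[K] W),
        v.toLinearMap ∘ₗ f = f' ∘ₗ u.toLinearMap ∧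
        w.toLinearMap ∘ₗ g = g' ∘ₗ v.toLinearMap) ↔
      finrank K (LinearMap.range f) = finrank K (LinearMap.range f') ∧
        finrank K (LinearMap.range g) = finrank K (LinearMap.range g') := by
  refine ⟨fun ⟨_, _, _, hf, hg⟩ =>
    ⟨finrank_range_eq_of_comp_eq hf, finrank_range_eq_of_comp_eq hg⟩, fun ⟨hf, hg⟩ => ?_⟩
  have finrank_ker_eq : finrank K (LinearMap.ker g) = finrank K (LinearMap.ker g') := by
    linarith [g.finrank_range_add_finrank_ker, g'.finrank_range_add_finrank_ker, hg]
  obtain ⟨v, map_range, map_ker⟩ := exists_linearEquiv_map_eq_of_le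
    (LinearMap.range_le_ker_iff.2 hgf) (LinearMap.range_le_ker_iff.2 hgf') hf finrank_ker_eq
  have range_eq : LinearMap.range (v.toLinearMap ∘ₗ f) = LinearMap.range f' := by
    rw [LinearMap.range_comp, map_range]
  have ker_eq : LinearMap.ker g = LinearMap.ker (g' ∘ₗ v.toLinearMap) := by
    rw [LinearMap.ker_comp, ← map_ker, Submodule.comap_map_eq_of_injective v.injective]
  obtain ⟨u, hu⟩ := exists_linearEquiv_comp_eq_of_range_eq range_eq
  obtain ⟨w, hw⟩ := exists_linearEquiv_comp_eq_of_ker_eq ker_eq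
  exact ⟨v, u, w, hu.symm, hw⟩

end LinearMap

section Matrix

variable {R m n : Type*} [CommRing R] [Fintype m] [DecidableEq m] [Fintype n] [DecidableEq n]

/-- The linear automorphism of `n → R` given by the action of an invertible matrix. -/
def glEquivLinearEquiv : GL n R ≃* ((n → R) ≃ₗ[R] (n → R)) :=
  GeneralLinearGroup.toLin.trans (LinearMap.GeneralLinearGroup.generalLinearEquiv R (n → R))

theorem toLinearMap_glEquivLinearEquiv (g : GL n R) :
    (glEquivLinearEquiv g).toLinearMap = toLin' (g : Matrix n n R) := rfl

theorem eq_mul_mul_inv_iff_comp_eq (g : GL m R) (h : GL n R) (A B : Matrix m n R) :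
    B = (g : Matrix m m R) * A * ((h⁻¹ : GL n R) : Matrix n n R) ↔
      (glEquivLinearEquiv g).toLinearMap ∘ₗ toLin' A =
        toLin' B ∘ₗ (glEquivLinearEquiv h).toLinearMap := by
  let := h.invertible
  rw [toLinearMap_glEquivLinearEquiv, toLinearMap_glEquivLinearEquiv, ← toLin'_mul, ← toLin'_mul,
    toLin'.injective.eq_iff, coe_units_inv, eq_comm, mul_inv_eq_iff_eq_mul_of_invertible]

end Matrix

theorem stmt_4_general {k l m n : Type*} [Field k] [Fintype l] [DecidableEq l]
    [Fintype m] [DecidableEq m] [Fintype n] [DecidableEq n]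
    (A₁ B₁ : Matrix m n k) (A₂ B₂ : Matrix l m k) (hA : A₂ * A₁ = 0) (hB : B₂ * B₁ = 0) :
    (∃ (g : GL m k) (h₁ : GL n k) (h₂ : GL l k),
        B₁ = (g : Matrix m m k) * A₁ * ((h₁⁻¹ : GL n k) : Matrix n n k) ∧
        B₂ = (h₂ : Matrix l l k) * A₂ * ((g⁻¹ : GL m k) : Matrix m m k))
      ↔ (A₁.rank = B₁.rank ∧ A₂.rank = B₂.rank) := by
  have comp_eq_zero {X : Matrix m n k} {Y : Matrix l m k} (h : Y * X = 0) :
      toLin' Y ∘ₗ toLin' X = 0 := by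
    rw [← toLin'_mul, h, map_zero]
  have linear_iff :=
    exists_linearEquiv_comp_eq_iff_finrank_range_eq (comp_eq_zero hA) (comp_eq_zero hB)
  simp only [glEquivLinearEquiv.surjective.exists] at linear_iff
  simp only [eq_mul_mul_inv_iff_comp_eq]
  exact linear_iff

/-- Two points `(A₁, A₂)`, `(B₁, B₂)` of the variety of complexes
`k^d → k^n → k^{n-d}` lie in the same orbit of `GL(n,k) × GL(d,k) × GL(n-d,k)`
(acting by `(g,h₁,h₂)·(A₁,A₂) = (g A₁ h₁⁻¹, h₂ A₂ g⁻¹)`) if and only if the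
corresponding ranks coincide. -/
theorem stmt_4 (k : Type*) [Field k] (n d : ℕ) (hd : d ≤ n)
    (A₁ B₁ : Matrix (Fin n) (Fin d) k) (A₂ B₂ : Matrix (Fin (n - d)) (Fin n) k)
    (hA : A₂ * A₁ = 0) (hB : B₂ * B₁ = 0) :
    (∃ (g : GL (Fin n) k) (h₁ : GL (Fin d) k) (h₂ : GL (Fin (n - d)) k),
        B₁ = (g : Matrix (Fin n) (Fin n) k) * A₁ * ((h₁⁻¹ : GL (Fin d) k) : Matrix (Fin d) (Fin d) k) ∧
        B₂ = (h₂ : Matrix (Fin (n - d)) (Fin (n - d)) k) * A₂ *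
              ((g⁻¹ : GL (Fin n) k) : Matrix (Fin n) (Fin n) k))
      ↔ (A₁.rank = B₁.rank ∧ A₂.rank = B₂.rank) := by
  exact stmt_4_general A₁ B₁ A₂ B₂ hA hB
end

section
/- Let 0 ≤ d ≤ n and let (A₁, A₂) and (B₁, B₂) be pairs with A₁, B₁ ∈ Mat_{n×d}(ℂ), A₂, B₂ ∈ Mat_{(n−d)×n}(ℂ) satisfying A₂A₁ = 0 and B₂B₁ = 0. Then (B₁, B₂) lies in the closure (with respect to the standard topology on pairs of complex matrices) of the orbit {(g A₁ h₁⁻¹, h₂ A₂ g⁻¹) : g ∈ GL(n,ℂ), h₁ ∈ GL(d,ℂ), h₂ ∈ GL(n−d,ℂ)} if and only if rank B₁ ≤ rank A₁ and rank B₂ ≤ rank A₂. -/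
open Matrix

/-!
Rank is lower semicontinuous and does not increase under multiplication, whence the rank
inequalities on the orbit closure.

Conversely, put `P = im A₁ ≤ Q = ker A₂` and `P' = im B₁ ≤ Q' = ker B₂`. The rank inequalities say
`dim P' ≤ dim P` and `dim Q ≤ dim Q'`, so some automorphism `g` of the ambient space satisfies
`P' ≤ g P` and `g Q ≤ Q'`. These inclusions amount to factorizations `B₁ = g A₁ M₁` and
`B₂ = M₂ A₂ g⁻¹` with square matrices `M₁`, `M₂`, which are limits of invertible matrices.
-/

section LinearMap

lemma exists_comp_eq_of_range_le {R X Y Z : Type*} [Ring R] [AddCommGroup X] [Module R X]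
    [AddCommGroup Y] [Module R Y] [Module.Projective R Y] [AddCommGroup Z] [Module R Z]
    {f : X →ₗ[R] Z} {f' : Y →ₗ[R] Z} (h : LinearMap.range f' ≤ LinearMap.range f) :
    ∃ m : Y →ₗ[R] X, f ∘ₗ m = f' := by
  obtain ⟨m, hm⟩ := Module.projective_lifting_property f.rangeRestrict
    (Submodule.inclusion h ∘ₗ f'.rangeRestrict) f.surjective_rangeRestrict
  exact ⟨m, congrArg (Submodule.subtype _ ∘ₗ ·) hm⟩

variable {K U U' V W W' : Type*} [DivisionRing K] [AddCommGroup U] [Module K U]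
  [AddCommGroup U'] [Module K U'] [AddCommGroup V] [Module K V] [AddCommGroup W] [Module K W]
  [AddCommGroup W'] [Module K W']

lemma exists_comp_eq_of_ker_le {f : V →ₗ[K] W} {f' : V →ₗ[K] W'}
    (h : LinearMap.ker f ≤ LinearMap.ker f') : ∃ m : W →ₗ[K] W', m ∘ₗ f = f' := by
  obtain ⟨s, hs⟩ := ((LinearMap.ker f).liftQ f le_rfl).exists_leftInverse_of_injective
    (Submodule.ker_liftQ_eq_bot _ f le_rfl le_rfl)
  refine ⟨(LinearMap.ker f).liftQ f' h ∘ₗ s, LinearMap.ext fun x => ?_⟩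
  have hsx : s (f x) = Submodule.Quotient.mk x :=
    LinearMap.congr_fun hs (Submodule.Quotient.mk x)
  simp only [LinearMap.comp_apply, hsx, Submodule.liftQ_apply]

lemma exists_linearEquiv_comp_eq_of_injective [FiniteDimensional K U] {f f' : U →ₗ[K] V}
    (hf : Function.Injective f) (hf' : Function.Injective f') :
    ∃ g : V ≃ₗ[K] V, g.toLinearMap ∘ₗ f = f' := by
  obtain ⟨g, hg⟩ := Submodule.exists_linearEquiv_restrict_eq
    ((LinearEquiv.ofInjective f hf).symm ≪≫ₗ LinearEquiv.ofInjective f' hf')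
  refine ⟨g, LinearMap.ext fun u => ?_⟩
  simpa using (hg (LinearEquiv.ofInjective f hf u)).symm

lemma exists_linearEquiv_le_map_and_map_le [FiniteDimensional K V] {P Q P' Q' : Submodule K V}
    (hPQ : P ≤ Q) (hPQ' : P' ≤ Q') (hP : Module.finrank K P' ≤ Module.finrank K P)
    (hQ : Module.finrank K Q ≤ Module.finrank K Q') :
    ∃ g : V ≃ₗ[K] V, P' ≤ P.map g.toLinearMap ∧ Q.map g.toLinearMap ≤ Q' := by
  obtain ⟨i, hi⟩ := finrank_le_iff_exists_linearMap.1 hP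
  obtain ⟨k, hk⟩ := finrank_le_iff_exists_linearMap.1 hQ
  -- `e` corrects `k : Q → Q'` so that it undoes `i : P' → P` on the image of `i`.
  obtain ⟨e, he⟩ := exists_linearEquiv_comp_eq_of_injective
    (hk.comp ((Submodule.inclusion_injective hPQ).comp hi)) (Submodule.inclusion_injective hPQ')
    (f := k ∘ₗ Submodule.inclusion hPQ ∘ₗ i)
  obtain ⟨g, hg⟩ := exists_linearEquiv_comp_eq_of_injective Q.injective_subtype
    (Q'.injective_subtype.comp (e.injective.comp hk)) (f' := Q'.subtype ∘ₗ e.toLinearMap ∘ₗ k)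
  have hgQ (q : Q) : g q = e (k q) := LinearMap.congr_fun hg q
  refine ⟨g, fun x hx => ⟨i ⟨x, hx⟩, (i ⟨x, hx⟩).2, ?_⟩, ?_⟩
  · calc g (i ⟨x, hx⟩) = e (k (Submodule.inclusion hPQ (i ⟨x, hx⟩))) :=
          hgQ (Submodule.inclusion hPQ (i ⟨x, hx⟩))
      _ = x := congrArg Subtype.val (LinearMap.congr_fun he ⟨x, hx⟩)
  · rintro _ ⟨q, hq, rfl⟩
    exact hgQ ⟨q, hq⟩ ▸ (e (k ⟨q, hq⟩)).2

theorem exists_linearEquiv_comp_eq_and_comp_eq [FiniteDimensional K V]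
    {f₁ : U →ₗ[K] V} {f₂ : V →ₗ[K] W} {f₁' : U' →ₗ[K] V} {f₂' : V →ₗ[K] W'}
    (hf : f₂ ∘ₗ f₁ = 0) (hf' : f₂' ∘ₗ f₁' = 0)
    (h₁ : Module.finrank K (LinearMap.range f₁') ≤ Module.finrank K (LinearMap.range f₁))
    (h₂ : Module.finrank K (LinearMap.range f₂') ≤ Module.finrank K (LinearMap.range f₂)) :
    ∃ (g : V ≃ₗ[K] V) (m₁ : U' →ₗ[K] U) (m₂ : W →ₗ[K] W'),
      (g.toLinearMap ∘ₗ f₁) ∘ₗ m₁ = f₁' ∧ m₂ ∘ₗ f₂ ∘ₗ g.symm.toLinearMap = f₂' := by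
  have hker : Module.finrank K (LinearMap.ker f₂) ≤ Module.finrank K (LinearMap.ker f₂') := by
    have := f₂.finrank_range_add_finrank_ker
    have := f₂'.finrank_range_add_finrank_ker
    lia
  obtain ⟨g, hrange, hker⟩ := exists_linearEquiv_le_map_and_map_le
    (LinearMap.range_le_ker_iff.2 hf) (LinearMap.range_le_ker_iff.2 hf') h₁ hker
  obtain ⟨m₁, hm₁⟩ := exists_comp_eq_of_range_le (f := g.toLinearMap ∘ₗ f₁) (f' := f₁')
    (by rwa [LinearMap.range_comp])
  obtain ⟨m₂, hm₂⟩ := exists_comp_eq_of_ker_le (f := f₂ ∘ₗ g.symm.toLinearMap) (f' := f₂')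
    (by rwa [LinearMap.ker_comp, ← Submodule.map_equiv_eq_comap_symm])
  exact ⟨g, m₁, m₂, hm₁, hm₂⟩

end LinearMap

section Matrix

variable {K l m n : Type*} [Field K] [Fintype l] [Fintype m] [Fintype n]

theorem exists_mul_mul_eq_one_of_le_rank {r : ℕ} {M : Matrix m n K} (h : r ≤ M.rank) :
    ∃ (P : Matrix (Fin r) m K) (Q : Matrix n (Fin r) K), P * M * Q = 1 := by
  classical
  have hr : Module.finrank K (Fin r → K) ≤ Module.finrank K (LinearMap.range (toLin' M)) := by
    rwa [Module.finrank_fin_fun]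
  obtain ⟨k, hk⟩ := finrank_le_iff_exists_linearMap.1 hr
  obtain ⟨q, hq⟩ := exists_comp_eq_of_range_le (f := toLin' M)
    (f' := Submodule.subtype _ ∘ₗ k) (by rintro _ ⟨x, rfl⟩; exact (k x).2)
  obtain ⟨p, hp⟩ := (toLin' M ∘ₗ q).exists_leftInverse_of_injective
    (LinearMap.ker_eq_bot.2 (hq ▸ (Submodule.injective_subtype _).comp hk))
  refine ⟨LinearMap.toMatrix' p, LinearMap.toMatrix' q, ?_⟩
  simpa [LinearMap.toMatrix'_comp, Matrix.mul_assoc] using congrArg LinearMap.toMatrix' hp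

theorem le_rank_iff_exists_det_mul_mul_ne_zero {r : ℕ} {M : Matrix m n K} :
    r ≤ M.rank ↔
      ∃ (P : Matrix (Fin r) m K) (Q : Matrix n (Fin r) K), (P * M * Q).det ≠ 0 := by
  refine ⟨fun h => ?_, fun ⟨P, Q, hdet⟩ => ?_⟩
  · obtain ⟨P, Q, hPQ⟩ := exists_mul_mul_eq_one_of_le_rank h
    exact ⟨P, Q, by simp [hPQ]⟩
  · calc r = (P * M * Q).rank := by rw [rank_of_det_ne_zero hdet, Fintype.card_fin]
      _ ≤ (P * M).rank := rank_mul_le_left _ _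
      _ ≤ M.rank := rank_mul_le_right _ _

theorem exists_generalLinearGroup_mul_mul_eq_and_mul_mul_eq
    [DecidableEq n] {A₁ B₁ : Matrix n m K} {A₂ B₂ : Matrix l n K}
    (hA : A₂ * A₁ = 0) (hB : B₂ * B₁ = 0) (h₁ : B₁.rank ≤ A₁.rank) (h₂ : B₂.rank ≤ A₂.rank) :
    ∃ (g : GL n K) (M₁ : Matrix m m K) (M₂ : Matrix l l K),
      g.val * A₁ * M₁ = B₁ ∧ M₂ * A₂ * g⁻¹.val = B₂ := by
  classical
  obtain ⟨e, m₁, m₂, hm₁, hm₂⟩ := exists_linearEquiv_comp_eq_and_comp_eq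
    (f₁ := toLin' A₁) (f₂ := toLin' A₂) (f₁' := toLin' B₁) (f₂' := toLin' B₂)
    (by rw [← toLin'_mul, hA, map_zero]) (by rw [← toLin'_mul, hB, map_zero]) h₁ h₂
  let g : GL n K := GeneralLinearGroup.toLin.symm
    ((LinearMap.GeneralLinearGroup.generalLinearEquiv K (n → K)).symm e)
  have hg : g.val = LinearMap.toMatrix' e.toLinearMap := rfl
  have hg' : g⁻¹.val = LinearMap.toMatrix' e.symm.toLinearMap := rfl
  refine ⟨g, LinearMap.toMatrix' m₁, LinearMap.toMatrix' m₂, ?_, ?_⟩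
  · simpa [LinearMap.toMatrix'_comp, hg] using congrArg LinearMap.toMatrix' hm₁
  · simpa [LinearMap.toMatrix'_comp, hg', Matrix.mul_assoc] using congrArg LinearMap.toMatrix' hm₂

/-- The orbit of `(A₁, A₂)`, viewed as a pair of composable maps, under simultaneous base change
in the three spaces; the pair itself need not be a complex. -/
def baseChangeOrbit [DecidableEq l] [DecidableEq m] [DecidableEq n]
    (A₁ : Matrix n m K) (A₂ : Matrix l n K) : Set (Matrix n m K × Matrix l n K) :=
  {p | ∃ (g : GL n K) (h₁ : GL m K) (h₂ : GL l K),
    p = (g.val * A₁ * h₁⁻¹.val, h₂.val * A₂ * g⁻¹.val)}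

end Matrix

section Topology

variable {𝕜 l m n : Type*} [Field 𝕜] [TopologicalSpace 𝕜] [IsTopologicalRing 𝕜] [T1Space 𝕜]
  [Fintype n]

theorem isOpen_setOf_le_rank [Finite m] (r : ℕ) :
    IsOpen {M : Matrix m n 𝕜 | r ≤ M.rank} := by
  cases nonempty_fintype m
  simp only [le_rank_iff_exists_det_mul_mul_ne_zero, Set.ofPred_exists]
  refine isOpen_iUnion fun P => isOpen_iUnion fun Q => isOpen_ne.preimage ?_
  fun_prop

theorem isClosed_setOf_rank_le [Finite m] (r : ℕ) :
    IsClosed {M : Matrix m n 𝕜 | M.rank ≤ r} := by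
  simpa only [← isOpen_compl_iff, Set.compl_ofPred, not_le, Nat.lt_iff_add_one_le] using
    isOpen_setOf_le_rank (r + 1)

variable [Fintype l] [Fintype m] [DecidableEq l] [DecidableEq m] [DecidableEq n]

theorem rank_le_of_mem_closure_baseChangeOrbit {A₁ B₁ : Matrix n m 𝕜} {A₂ B₂ : Matrix l n 𝕜}
    (h : (B₁, B₂) ∈ closure (baseChangeOrbit A₁ A₂)) :
    B₁.rank ≤ A₁.rank ∧ B₂.rank ≤ A₂.rank := by
  let S := {M : Matrix n m 𝕜 | M.rank ≤ A₁.rank} ×ˢ {M : Matrix l n 𝕜 | M.rank ≤ A₂.rank}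
  have hclosed : IsClosed S := (isClosed_setOf_rank_le _).prod (isClosed_setOf_rank_le _)
  have horbit : baseChangeOrbit A₁ A₂ ⊆ S := by
    rintro _ ⟨g, h₁, h₂, rfl⟩
    exact ⟨(rank_mul_le_left _ _).trans (rank_mul_le_right _ _),
      (rank_mul_le_left _ _).trans (rank_mul_le_right _ _)⟩
  exact Set.mem_prod.1 (closure_minimal horbit hclosed h)

variable [PerfectSpace 𝕜]

theorem denseRange_generalLinearGroup_val : DenseRange (Units.val : GL n 𝕜 → Matrix n n 𝕜) := by
  intro M
  let φ (t : 𝕜) : Matrix n n 𝕜 := M - algebraMap 𝕜 _ t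
  have hφ : Continuous φ := by
    simp only [φ, Algebra.algebraMap_eq_smul_one]
    fun_prop
  have hdense : Dense (spectrum 𝕜 M)ᶜ := by
    simpa only [Set.compl_eq_univ_sdiff] using dense_univ.sdiff_finite M.finite_spectrum
  have hunit : Set.MapsTo φ (spectrum 𝕜 M)ᶜ (Set.range Units.val) := fun t ht => by
    have hsub : IsUnit (algebraMap 𝕜 _ t - M) := spectrum.notMem_iff.1 ht
    rwa [← IsUnit.neg_iff, neg_sub] at hsub
  simpa only [φ, map_zero, sub_zero] using map_mem_closure hφ (hdense 0) hunit

theorem mul_mul_mem_closure_baseChangeOrbit (A₁ : Matrix n m 𝕜) (A₂ : Matrix l n 𝕜) (g : GL n 𝕜)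
    (M₁ : Matrix m m 𝕜) (M₂ : Matrix l l 𝕜) :
    (g.val * A₁ * M₁, M₂ * A₂ * g⁻¹.val) ∈ closure (baseChangeOrbit A₁ A₂) := by
  have hdense := denseRange_generalLinearGroup_val.prodMap denseRange_generalLinearGroup_val
    (M₁, M₂)
  refine map_mem_closure (f := fun q : Matrix m m 𝕜 × Matrix l l 𝕜 =>
    (g.val * A₁ * q.1, q.2 * A₂ * g⁻¹.val)) (by fun_prop) hdense ?_
  rintro _ ⟨⟨h₁, h₂⟩, rfl⟩
  exact ⟨g, h₁⁻¹, h₂, by simp only [inv_inv, Prod.map]⟩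

theorem stmt_5_general {A₁ B₁ : Matrix n m 𝕜} {A₂ B₂ : Matrix l n 𝕜}
    (hA : A₂ * A₁ = 0) (hB : B₂ * B₁ = 0) :
    (B₁, B₂) ∈ closure (baseChangeOrbit A₁ A₂) ↔ B₁.rank ≤ A₁.rank ∧ B₂.rank ≤ A₂.rank := by
  refine ⟨rank_le_of_mem_closure_baseChangeOrbit, fun ⟨h₁, h₂⟩ => ?_⟩
  obtain ⟨g, M₁, M₂, rfl, rfl⟩ :=
    exists_generalLinearGroup_mul_mul_eq_and_mul_mul_eq hA hB h₁ h₂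
  exact mul_mul_mem_closure_baseChangeOrbit A₁ A₂ g M₁ M₂

end Topology

/-- In the variety of complexes over `ℂ`, the point `(B₁, B₂)` lies in the closure
(standard topology) of the `GL(n,ℂ) × GL(d,ℂ) × GL(n-d,ℂ)`-orbit of `(A₁, A₂)`
if and only if `rank B₁ ≤ rank A₁` and `rank B₂ ≤ rank A₂`. -/
theorem stmt_5 (n d : ℕ) (hd : d ≤ n)
    (A₁ B₁ : Matrix (Fin n) (Fin d) ℂ) (A₂ B₂ : Matrix (Fin (n - d)) (Fin n) ℂ)
    (hA : A₂ * A₁ = 0) (hB : B₂ * B₁ = 0) :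
    (B₁, B₂) ∈ closure {p : Matrix (Fin n) (Fin d) ℂ × Matrix (Fin (n - d)) (Fin n) ℂ |
        ∃ (g : GL (Fin n) ℂ) (h₁ : GL (Fin d) ℂ) (h₂ : GL (Fin (n - d)) ℂ),
          p = ((g : Matrix (Fin n) (Fin n) ℂ) * A₁ *
                ((h₁⁻¹ : GL (Fin d) ℂ) : Matrix (Fin d) (Fin d) ℂ),
               (h₂ : Matrix (Fin (n - d)) (Fin (n - d)) ℂ) * A₂ *
                ((g⁻¹ : GL (Fin n) ℂ) : Matrix (Fin n) (Fin n) ℂ))}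
      ↔ (B₁.rank ≤ A₁.rank ∧ B₂.rank ≤ A₂.rank) :=
  stmt_5_general hA hB
end

section
/- Let k be a field and n ≥ 1. For A, B ∈ Mat_{n×(n−1)}(k), there exists g ∈ SL(n,k) with gA = B if and only if the kernels of the linear maps k^{n−1} → k^n determined by A and B coincide, i.e., {v ∈ k^{n−1} : Av = 0} = {v ∈ k^{n−1} : Bv = 0}. -/
open Matrix

/-!
Two linear maps `f g : V → W` with the same kernel differ by an isomorphism `range f ≃ range g`,
which extends to an automorphism `e` of `W`, so `e ∘ f = g`. If `f` is not surjective, some nonzero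
functional `φ` vanishes on `range f`, and the maps `w ↦ w + φ w • u` fix `range f` pointwise while
their determinants `1 + φ u` take every value. Precomposing `e` with such a map of determinant
`(det e)⁻¹` brings it into the special linear group. An `n × (n - 1)` matrix is never surjective.
-/

section LinearMap

variable {K V W : Type*} [AddCommGroup V] [AddCommGroup W]

theorem exists_linearEquiv_comp_eq_iff_ker_eq_ker [DivisionRing K] [Module K V] [Module K W]
    (f g : V →ₗ[K] W) [FiniteDimensional K (LinearMap.range f)] :
    (∃ e : W ≃ₗ[K] W, e.toLinearMap ∘ₗ f = g) ↔ LinearMap.ker f = LinearMap.ker g := by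
  constructor
  · rintro ⟨e, rfl⟩
    exact (LinearEquiv.ker_comp e f).symm
  · intro h
    let rangeEquiv : LinearMap.range f ≃ₗ[K] LinearMap.range g :=
      f.quotKerEquivRange.symm ≪≫ₗ Submodule.quotEquivOfEq _ _ h ≪≫ₗ g.quotKerEquivRange
    have rangeEquiv_apply (v : V) : rangeEquiv ⟨f v, f.mem_range_self v⟩ = g v := by
      simp [rangeEquiv]
    obtain ⟨e, he⟩ := Submodule.exists_linearEquiv_restrict_eq rangeEquiv
    exact ⟨e, LinearMap.ext fun v ↦ (he ⟨f v, f.mem_range_self v⟩).symm.trans (rangeEquiv_apply v)⟩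

variable [Field K] [Module K V] [Module K W] [FiniteDimensional K W]

theorem exists_linearEquiv_det_eq_and_le_fixedSubmodule {p : Submodule K W} (hp : p < ⊤) (d : Kˣ) :
    ∃ t : W ≃ₗ[K] W, LinearEquiv.det t = d ∧ p ≤ t.toLinearMap.fixedSubmodule := by
  obtain ⟨φ, hφ, hpφ⟩ := p.exists_le_ker_of_lt_top hp
  obtain ⟨u, hu⟩ := LinearMap.surjective hφ (d - 1)
  have det_eq : LinearMap.det (LinearMap.transvection φ u) = d := by
    rw [LinearMap.transvection.det, hu, add_sub_cancel]
  refine ⟨LinearMap.equivOfDetNeZero _ (det_eq ▸ d.ne_zero), Units.ext ?_, fun w hw ↦ ?_⟩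
  · exact (LinearEquiv.coe_det _).trans det_eq
  · have hφw : φ w = 0 := hpφ hw
    simp [LinearMap.transvection.apply, hφw]

theorem exists_specialLinearGroup_comp_eq_iff_ker_eq_ker {f : V →ₗ[K] W}
    (hf : LinearMap.range f < ⊤) (g : V →ₗ[K] W) :
    (∃ u : SpecialLinearGroup K W, u.1.toLinearMap ∘ₗ f = g) ↔
      LinearMap.ker f = LinearMap.ker g := by
  rw [← exists_linearEquiv_comp_eq_iff_ker_eq_ker]
  constructor
  · rintro ⟨u, hu⟩
    exact ⟨u, hu⟩
  · rintro ⟨e, rfl⟩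
    obtain ⟨t, det_t, ht⟩ :=
      exists_linearEquiv_det_eq_and_le_fixedSubmodule hf (LinearEquiv.det e)⁻¹
    refine ⟨⟨e * t, by rw [map_mul, det_t, mul_inv_cancel]⟩, LinearMap.ext fun v ↦ ?_⟩
    exact congrArg e (LinearMap.mem_fixedSubmodule_iff.1 (ht (f.mem_range_self v)))

end LinearMap

theorem exists_specialLinearGroup_mul_eq_iff_exists_comp_mulVecLin_eq {R m n : Type*} [CommRing R]
    [Fintype m] [DecidableEq m] [Fintype n] (A B : Matrix m n R) :
    (∃ g : Matrix.SpecialLinearGroup m R, (g : Matrix m m R) * A = B) ↔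
      ∃ u : SpecialLinearGroup R (m → R), u.1.toLinearMap ∘ₗ A.mulVecLin = B.mulVecLin := by
  refine Matrix.SpecialLinearGroup.toLin'_equiv.toEquiv.exists_congr fun g ↦ ?_
  simp only [Matrix.ext_iff_mulVec, ← Matrix.mulVec_mulVec, LinearMap.ext_iff]
  rfl

theorem stmt_6_general {k m n : Type*} [Field k] [Fintype m] [DecidableEq m] [Fintype n]
    (A B : Matrix m n k) (hA : A.rank < Fintype.card m) :
    (∃ g : Matrix.SpecialLinearGroup m k, (g : Matrix m m k) * A = B) ↔
      LinearMap.ker A.mulVecLin = LinearMap.ker B.mulVecLin := by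
  have range_lt_top : LinearMap.range A.mulVecLin < ⊤ :=
    Submodule.lt_top_of_finrank_lt_finrank (hA.trans_eq (Module.finrank_fintype_fun_eq_card k).symm)
  rw [exists_specialLinearGroup_mul_eq_iff_exists_comp_mulVecLin_eq,
    exists_specialLinearGroup_comp_eq_iff_ker_eq_ker range_lt_top]

/-- Two `n × (n-1)` matrices over a field lie in the same `SL(n,k)`-orbit for
left multiplication if and only if they have the same kernel. -/
theorem stmt_6 (k : Type*) [Field k] (n : ℕ) (hn : 1 ≤ n)
    (A B : Matrix (Fin n) (Fin (n - 1)) k) :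
    (∃ g : Matrix.SpecialLinearGroup (Fin n) k,
        (g : Matrix (Fin n) (Fin n) k) * A = B)
      ↔ LinearMap.ker A.mulVecLin = LinearMap.ker B.mulVecLin :=
  stmt_6_general A B <| by
    rw [Fintype.card_fin]
    exact A.rank_le_width.trans_lt (Nat.sub_one_lt_of_le hn le_rfl)
end

section
/- Let k be a field of characteristic 0 and l ≥ 1. Let A, B ∈ Mat_{2l×l}(k) satisfy AᵀJA = 0 and BᵀJB = 0. Then there exists g ∈ Sp(2l,k) with gA = B if and only if the kernels of the linear maps k^l → k^{2l} determined by A and B coincide, i.e., {v ∈ k^l : Av = 0} = {v ∈ k^l : Bv = 0}. -/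
open Matrix

/-- The standard symplectic matrix `J = [[0, I],[−I, 0]]`. -/
def stdJ (k : Type*) [Field k] (l : ℕ) : Matrix (Fin l ⊕ Fin l) (Fin l ⊕ Fin l) k :=
  Matrix.fromBlocks 0 1 (-1) 0

/-!
The theorem is an instance of Witt's extension theorem for a nondegenerate alternating form `ω` on a
finite-dimensional space: two linear maps into it that have the same kernel and pull `ω` back to the
same form differ by an isometry of `ω`.

The isometry is built one vector at a time. Suppose that it is already the identity on `W` and still
has to carry `u` to `v`, where `u, v ∉ W` and `u - v` is orthogonal to `W`. If `ω u v ≠ 0`, then a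
transvection along `v - u` does this. Otherwise one passes through an intermediate vector `u + t`
with `t` orthogonal to `W` but neither to `u` nor to `v`; such a `t` exists because no space is the
union of two proper subspaces.
-/

namespace SymplecticWitt

section Transvection

variable {R M : Type*} [CommRing R] [AddCommGroup M] [Module R M] {ω : LinearMap.BilinForm R M}

/-- The symplectic transvection `x ↦ x + c * ω(a, x) a` along the vector `a`, as an isometry of the
alternating form `ω`. -/
def symplecticTransvection (hω : ω.IsAlt) (c : R) (a : M) : ω.IsometryEquiv ω where
  __ := LinearEquiv.transvection (f := c • ω a) (v := a) (by simp [hω a])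
  map_app' x y := by
    change ω (x + (c • ω a) x • a) (y + (c • ω a) y • a) = ω x y
    have hxa : ω x a = -ω a x := (hω.neg_eq a x).symm
    simp only [map_add, map_smul, LinearMap.add_apply, LinearMap.smul_apply, smul_eq_mul, hω a, hxa]
    ring

lemma symplecticTransvection_apply (hω : ω.IsAlt) (c : R) (a x : M) :
    symplecticTransvection hω c a x = x + (c * ω a x) • a :=
  rfl

end Transvection

section Witt

variable {K V U : Type*} [Field K] [AddCommGroup V] [Module K V] [AddCommGroup U] [Module K U]
  {ω : LinearMap.BilinForm K V}

lemma exists_isometryEquiv_apply_eq_of_apply_ne_zero (hω : ω.IsAlt) {u v : V} (huv : ω u v ≠ 0) :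
    ∃ g : ω.IsometryEquiv ω, g u = v ∧ ∀ w, ω u w = ω v w → g w = w := by
  refine ⟨symplecticTransvection hω (ω v u)⁻¹ (v - u), ?_, fun w hw => ?_⟩
  · have hvu : ω v u ≠ 0 := fun h => huv (hω.isRefl v u h)
    simp [symplecticTransvection_apply, hω u, hvu]
  · simp [symplecticTransvection_apply, hw]

lemma exists_mem_orthogonal_apply_ne_zero [FiniteDimensional K V] (hrefl : ω.IsRefl)
    (hnd : ω.Nondegenerate) {W : Submodule K V} {u : V} (hu : u ∉ W) :
    ∃ t ∈ ω.orthogonal W, ω u t ≠ 0 := by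
  by_contra! h
  refine hu ?_
  rw [← LinearMap.BilinForm.orthogonal_orthogonal hnd hrefl W]
  exact fun t ht => hrefl u t (h t ht)

lemma exists_mem_orthogonal_apply_ne_zero_and_ne_zero [FiniteDimensional K V] (hrefl : ω.IsRefl)
    (hnd : ω.Nondegenerate) {W : Submodule K V} {u v : V} (hu : u ∉ W) (hv : v ∉ W) :
    ∃ t ∈ ω.orthogonal W, ω u t ≠ 0 ∧ ω v t ≠ 0 := by
  by_contra! h
  have hcover : (ω.orthogonal W : Set V) ⊆ LinearMap.ker (ω u) ∪ LinearMap.ker (ω v) :=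
    fun t ht => or_iff_not_imp_left.2 (h t ht)
  obtain ⟨s, hs, hus⟩ := exists_mem_orthogonal_apply_ne_zero hrefl hnd hu
  obtain ⟨t, ht, hvt⟩ := exists_mem_orthogonal_apply_ne_zero hrefl hnd hv
  exact (AddSubgroupClass.subset_union.1 hcover).elim (fun hle => hus (hle hs))
    fun hle => hvt (hle ht)

lemma exists_isometryEquiv_apply_eq_and_forall_mem_apply_eq [FiniteDimensional K V] (hω : ω.IsAlt)
    (hnd : ω.Nondegenerate) {W : Submodule K V} {u v : V} (hu : u ∉ W) (hv : v ∉ W)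
    (huv : ∀ w ∈ W, ω u w = ω v w) :
    ∃ g : ω.IsometryEquiv ω, g u = v ∧ ∀ w ∈ W, g w = w := by
  by_cases h : ω u v = 0
  · obtain ⟨t, htW, hut, hvt⟩ :=
      exists_mem_orthogonal_apply_ne_zero_and_ne_zero hω.isRefl hnd hu hv
    have htw : ∀ w ∈ W, ω t w = 0 := fun w hw => hω.isRefl w t (htW w hw)
    obtain ⟨g₁, hg₁u, hg₁W⟩ :=
      exists_isometryEquiv_apply_eq_of_apply_ne_zero hω (u := u) (v := u + t) (by simpa [hω u])
    obtain ⟨g₂, hg₂u, hg₂W⟩ :=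
      exists_isometryEquiv_apply_eq_of_apply_ne_zero hω (u := u + t) (v := v)
        (by simpa [h] using fun h' => hvt (hω.isRefl t v h'))
    refine ⟨g₁.trans g₂, (congrArg g₂ hg₁u).trans hg₂u, fun w hw => ?_⟩
    have h₁ : g₁ w = w := hg₁W w (by simp [htw w hw])
    exact (congrArg g₂ h₁).trans (hg₂W w (by simp [htw w hw, huv w hw]))
  · obtain ⟨g, hgu, hgW⟩ := exists_isometryEquiv_apply_eq_of_apply_ne_zero hω h
    exact ⟨g, hgu, fun w hw => hgW w (huv w hw)⟩

variable {a b : U →ₗ[K] V}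

lemma exists_isometryEquiv_forall_mem_span_singleton_sup [FiniteDimensional K V] (hω : ω.IsAlt)
    (hnd : ω.Nondegenerate) (hform : ∀ x y, ω (a x) (a y) = ω (b x) (b y))
    (hker : LinearMap.ker a = LinearMap.ker b) {S : Submodule K U}
    (hS : ∃ g : ω.IsometryEquiv ω, ∀ y ∈ S, g (a y) = b y) (x : U) :
    ∃ g : ω.IsometryEquiv ω, ∀ y ∈ Submodule.span K {x} ⊔ S, g (a y) = b y := by
  obtain ⟨g, hg⟩ := hS
  suffices ∃ h : ω.IsometryEquiv ω, h (g (a x)) = b x ∧ ∀ w ∈ S.map b, h w = w by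
    obtain ⟨h, hx, hfix⟩ := this
    refine ⟨g.trans h, fun y hy => ?_⟩
    rw [← Submodule.span_eq S, ← Submodule.span_insert, Submodule.mem_span_insert] at hy
    obtain ⟨c, s, hs, rfl⟩ := hy
    rw [Submodule.span_eq] at hs
    change h (g (a (c • x + s))) = b (c • x + s)
    simp only [map_add, map_smul, hx, hg s hs, hfix (b s) (Submodule.mem_map_of_mem hs)]
  by_cases hx : g (a x) = b x
  · exact ⟨.refl ω, hx, fun _ _ => rfl⟩
  have ha_eq_iff : ∀ y, a y = a x ↔ b y = b x := fun y => by
    rw [← LinearMap.sub_mem_ker_iff, hker, LinearMap.sub_mem_ker_iff]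
  have hb_ne : ∀ y ∈ S, b y ≠ b x := fun y hy hyx =>
    hx (by rw [← (ha_eq_iff y).2 hyx, hg y hy, hyx])
  apply exists_isometryEquiv_apply_eq_and_forall_mem_apply_eq hω hnd
  · rintro ⟨y, hy, hyx⟩
    rw [← hg y hy] at hyx
    exact hb_ne y hy ((ha_eq_iff y).1 (EquivLike.injective g hyx))
  · rintro ⟨y, hy, hyx⟩
    exact hb_ne y hy hyx
  · rintro _ ⟨y, hy, rfl⟩
    rw [← hform x y, ← hg y hy, g.map_app]

theorem exists_isometryEquiv_forall_apply_eq [FiniteDimensional K V] [FiniteDimensional K U]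
    (hω : ω.IsAlt) (hnd : ω.Nondegenerate) (hform : ∀ x y, ω (a x) (a y) = ω (b x) (b y))
    (hker : LinearMap.ker a = LinearMap.ker b) :
    ∃ g : ω.IsometryEquiv ω, ∀ x, g (a x) = b x := by
  classical
  have extend_to_span (s : Finset U) :
      ∃ g : ω.IsometryEquiv ω, ∀ x ∈ Submodule.span K (s : Set U), g (a x) = b x := by
    induction s using Finset.induction with
    | empty => exact ⟨.refl ω, by simp⟩
    | insert x s _ ih =>
      rw [Finset.coe_insert, Submodule.span_insert]
      exact exists_isometryEquiv_forall_mem_span_singleton_sup hω hnd hform hker ih x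
  obtain ⟨s, hs⟩ := Module.Finite.fg_top (R := K) (M := U)
  simpa [hs] using extend_to_span s

end Witt

section Matrix

variable {n m : Type*} [Fintype n] [DecidableEq n] [Fintype m]

lemma forall_toBilin'_mulVec_eq_iff {R : Type*} [CommSemiring R] {M : Matrix n n R}
    {A B : Matrix n m R} :
    (∀ x y, toBilin' M (A *ᵥ x) (A *ᵥ y) = toBilin' M (B *ᵥ x) (B *ᵥ y)) ↔
      Aᵀ * M * A = Bᵀ * M * B := by
  classical
  rw [← toBilin'.injective.eq_iff, ← toBilin'_comp, ← toBilin'_comp, LinearMap.ext_iff₂]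
  rfl

lemma isAlt_toBilin'_J {R : Type*} [CommRing R] : (toBilin' (J n R)).IsAlt := by
  intro x
  simp [toBilin'_apply', J, dotProduct, mulVec, one_apply, mul_comm]

lemma toMatrix'_mem_symplecticGroup {R : Type*} [CommRing R]
    (g : (toBilin' (J n R)).IsometryEquiv (toBilin' (J n R))) :
    LinearMap.toMatrix' g.toLinearEquiv.toLinearMap ∈ symplecticGroup n R := by
  rw [SymplecticGroup.mem_iff']
  suffices (LinearMap.toMatrix' g.toLinearEquiv.toLinearMap)ᵀ * J n R *
      LinearMap.toMatrix' g.toLinearEquiv.toLinearMap = 1ᵀ * J n R * 1 by simpa using this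
  exact forall_toBilin'_mulVec_eq_iff.1 fun x y => by simp [LinearMap.toMatrix'_mulVec]

lemma ker_mulVecLin_mul_of_isUnit {R : Type*} [CommRing R] {G : Matrix n n R} (hG : IsUnit G)
    (A : Matrix n m R) : LinearMap.ker (G * A).mulVecLin = LinearMap.ker A.mulVecLin := by
  rw [mulVecLin_mul]
  exact LinearMap.ker_comp_of_ker_eq_bot _
    (LinearMap.ker_eq_bot.2 (mulVec_injective_of_isUnit hG))

end Matrix

lemma stdJ_eq_neg_J {k : Type*} [Field k] {l : ℕ} : stdJ k l = -J (Fin l) k := by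
  simp [stdJ, J, fromBlocks_neg]

end SymplecticWitt

open SymplecticWitt

theorem stmt_9_general {k n m : Type*} [Field k] [Fintype n] [DecidableEq n] [Fintype m]
    (A B : Matrix (n ⊕ n) m k) :
    (∃ g ∈ symplecticGroup n k, g * A = B) ↔
      Aᵀ * J n k * A = Bᵀ * J n k * B ∧ LinearMap.ker A.mulVecLin = LinearMap.ker B.mulVecLin := by
  constructor
  · rintro ⟨g, hg, rfl⟩
    have hu : IsUnit g := (isUnit_iff_isUnit_det g).2 (SymplecticGroup.symplectic_det hg)
    refine ⟨?_, (ker_mulVecLin_mul_of_isUnit hu A).symm⟩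
    calc Aᵀ * J n k * A = Aᵀ * (gᵀ * J n k * g) * A := by rw [SymplecticGroup.mem_iff'.1 hg]
      _ = (g * A)ᵀ * J n k * (g * A) := by simp only [transpose_mul, Matrix.mul_assoc]
  · rintro ⟨hform, hker⟩
    have hnd : (toBilin' (J n k)).Nondegenerate :=
      LinearMap.BilinForm.nondegenerate_toBilin'_of_det_ne_zero' _ (isUnit_det_J n k).ne_zero
    obtain ⟨g, hg⟩ := exists_isometryEquiv_forall_apply_eq (a := A.mulVecLin) (b := B.mulVecLin)
      isAlt_toBilin'_J hnd (forall_toBilin'_mulVec_eq_iff.2 hform) hker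
    refine ⟨_, toMatrix'_mem_symplecticGroup g, ext_iff_mulVec.2 fun x => ?_⟩
    rw [← mulVec_mulVec, LinearMap.toMatrix'_mulVec]
    exact hg x

/-- Two `2l × l` matrices with isotropic image over a field of characteristic 0 lie
in the same `Sp(2l,k)`-orbit for left multiplication if and only if they have the
same kernel. -/
theorem stmt_9 (k : Type*) [Field k] [CharZero k] (l : ℕ) (hl : 1 ≤ l)
    (A B : Matrix (Fin l ⊕ Fin l) (Fin l) k)
    (hA : Aᵀ * stdJ k l * A = 0) (hB : Bᵀ * stdJ k l * B = 0) :
    (∃ g : Matrix (Fin l ⊕ Fin l) (Fin l ⊕ Fin l) k,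
        gᵀ * stdJ k l * g = stdJ k l ∧ g * A = B)
      ↔ LinearMap.ker A.mulVecLin = LinearMap.ker B.mulVecLin := by
  simp only [stdJ_eq_neg_J, Matrix.mul_neg, Matrix.neg_mul, neg_eq_zero] at hA hB
  simpa [stdJ_eq_neg_J, SymplecticGroup.mem_iff', hA, hB] using stmt_9_general A B
end

section
/- Let k be a field of characteristic 0, let V₁, V₂, V₃ be nonzero finite-dimensional k-vector spaces, let R be a nonzero k-vector space, and let φ₁ : R → Hom(V₂,V₁), φ₂ : R → Hom(V₃,V₁), φ₃ : R → Hom(V₃,V₂) be injective linear maps. Let W = {(φ₁(r), φ₂(r), φ₃(r)) : r ∈ R} ⊆ Hom(V₂,V₁) ⊕ Hom(V₃,V₁) ⊕ Hom(V₃,V₂) be the diagonal image. Suppose x₁, x₂, x₃ ∈ k satisfy x₁·dim V₁ + x₂·dim V₂ + x₃·dim V₃ = 0, and that the linear endomorphism (f, g, h) ↦ ((x₁−x₂)f, (x₁−x₃)g, (x₂−x₃)h) maps W into W. Then x₁ = x₂ = x₃ = 0. -/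
/-!
If `(φ₁ s, φ₂ s, φ₃ s)` is the image of the diagonal vector of some `r ≠ 0`, injectivity makes `s`
the multiple of `r` by each of `x₁ - x₂`, `x₁ - x₃` and `x₂ - x₃`, so these scalars agree. The first
equality gives `x₂ = x₃`, the second `x₁ = x₂`, and the trace condition then says that `x₁` times
the total dimension, which is nonzero in characteristic zero, vanishes.
-/

section DiagonalStability

variable {k R E F G : Type*} [Ring k] [IsDomain k]
  [AddCommGroup R] [Module k R] [Module.IsTorsionFree k R]
  [AddCommGroup E] [Module k E] [AddCommGroup F] [Module k F] [AddCommGroup G] [Module k G]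

theorem eq_of_smul_map_eq_map {φ : R →ₗ[k] E} {ψ : R →ₗ[k] F}
    (hφ : Function.Injective φ) (hψ : Function.Injective ψ) {r s : R} (hr : r ≠ 0) {a b : k}
    (ha : a • φ r = φ s) (hb : b • ψ r = ψ s) : a = b := by
  have har : a • r = s := hφ ((map_smul φ a r).trans ha)
  have hbr : b • r = s := hψ ((map_smul ψ b r).trans hb)
  exact smul_left_injective k hr (har.trans hbr.symm)

/-- The weights `d₁, d₂, d₃` generalize the dimensions of the three blocks, and `E, F, G` the
off-diagonal blocks. -/
theorem stmt_12_general {φ₁ : R →ₗ[k] E} {φ₂ : R →ₗ[k] F} {φ₃ : R →ₗ[k] G}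
    (h₁ : Function.Injective φ₁) (h₂ : Function.Injective φ₂) (h₃ : Function.Injective φ₃)
    {x₁ x₂ x₃ d₁ d₂ d₃ : k} (hd : d₁ + d₂ + d₃ ≠ 0)
    (htrace : x₁ * d₁ + x₂ * d₂ + x₃ * d₃ = 0)
    (hstab : ∃ r : R, r ≠ 0 ∧ ∃ s : R,
      (x₁ - x₂) • φ₁ r = φ₁ s ∧ (x₁ - x₃) • φ₂ r = φ₂ s ∧ (x₂ - x₃) • φ₃ r = φ₃ s) :
    x₁ = 0 ∧ x₂ = 0 ∧ x₃ = 0 := by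
  obtain ⟨r, hr, s, hs₁, hs₂, hs₃⟩ := hstab
  obtain rfl : x₂ = x₃ := sub_right_injective (eq_of_smul_map_eq_map h₁ h₂ hr hs₁ hs₂)
  obtain rfl : x₁ = x₂ := sub_left_injective (eq_of_smul_map_eq_map h₂ h₃ hr hs₂ hs₃)
  have hmul : x₁ * (d₁ + d₂ + d₃) = 0 := by rw [mul_add, mul_add, htrace]
  have hx : x₁ = 0 := (mul_eq_zero.mp hmul).resolve_right hd
  exact ⟨hx, hx, hx⟩

end DiagonalStability

/-- Linear-algebra core of Losev's example: if the scalars `x₁, x₂, x₃` satisfy the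
trace condition `x₁·dim V₁ + x₂·dim V₂ + x₃·dim V₃ = 0` and the operator acting on
the three off-diagonal blocks by `x₁−x₂`, `x₁−x₃`, `x₂−x₃` preserves the diagonally
embedded copy `W` of `R`, then `x₁ = x₂ = x₃ = 0`. -/
theorem stmt_12 (k : Type*) [Field k] [CharZero k]
    (V₁ V₂ V₃ R : Type*)
    [AddCommGroup V₁] [Module k V₁] [FiniteDimensional k V₁]
    [AddCommGroup V₂] [Module k V₂] [FiniteDimensional k V₂]
    [AddCommGroup V₃] [Module k V₃] [FiniteDimensional k V₃]
    [AddCommGroup R] [Module k R]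
    (hV₁ : Nontrivial V₁) (hV₂ : Nontrivial V₂) (hV₃ : Nontrivial V₃)
    (hR : Nontrivial R)
    (φ₁ : R →ₗ[k] (V₂ →ₗ[k] V₁)) (φ₂ : R →ₗ[k] (V₃ →ₗ[k] V₁))
    (φ₃ : R →ₗ[k] (V₃ →ₗ[k] V₂))
    (h₁ : Function.Injective φ₁) (h₂ : Function.Injective φ₂)
    (h₃ : Function.Injective φ₃)
    (x₁ x₂ x₃ : k)
    (htrace : x₁ * (Module.finrank k V₁ : k) + x₂ * (Module.finrank k V₂ : k)
        + x₃ * (Module.finrank k V₃ : k) = 0)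
    (hstab : ∀ r : R, ∃ r' : R,
        (x₁ - x₂) • φ₁ r = φ₁ r' ∧ (x₁ - x₃) • φ₂ r = φ₂ r' ∧
        (x₂ - x₃) • φ₃ r = φ₃ r') :
    x₁ = 0 ∧ x₂ = 0 ∧ x₃ = 0 := by
  have hpos : 0 < Module.finrank k (V₁ × V₂ × V₃) := Module.finrank_pos
  have hdim : (Module.finrank k V₁ : k) + Module.finrank k V₂ + Module.finrank k V₃ ≠ 0 := by
    simpa [add_assoc] using Nat.cast_ne_zero (R := k).mpr hpos.ne'
  obtain ⟨r, hr⟩ := exists_ne (0 : R)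
  exact stmt_12_general h₁ h₂ h₃ hdim htrace ⟨r, hr, hstab r⟩
end

section
/- Let r ≥ 1, let Λ ⊆ ℤ^r be a finite set, and let V = ⊕_{λ∈Λ} V_λ be a finite-dimensional complex vector space graded by Λ. For γ ∈ ℤ^r and t ∈ ℂ \ {0}, let γ(t) : V → V be the linear operator acting on V_λ as multiplication by t^{⟨γ,λ⟩}, where ⟨γ,λ⟩ = Σ_{i=1}^r γ_i λ_i. Let x ∈ V, and let γ₁, …, γ_m ∈ ℤ^r satisfy γ₁ + ⋯ + γ_m = 0. If for each j = 1, …, m the limit lim_{t→0} γ_j(t)x exists in V, then γ_j(t)x = x for all j and all t ∈ ℂ \ {0}; that is, x is fixed by each of the one-parameter subgroups γ_j. -/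
/-- The operator `γ(t)` on the `Λ`-graded complex vector space `V = ⊕_{λ∈Λ} V_λ`
(with `V_λ = ℂ^{d(λ)}`), acting on the component of degree `λ` as multiplication by
`t^{⟨γ,λ⟩}` where `⟨γ,λ⟩ = Σᵢ γᵢ λᵢ`. -/
noncomputable def wtAct {r : ℕ} (Λ : Finset (Fin r → ℤ)) (d : (Fin r → ℤ) → ℕ)
    (γ : Fin r → ℤ) (t : ℂ) (x : ∀ lam : Λ, Fin (d lam) → ℂ) :
    ∀ lam : Λ, Fin (d lam) → ℂ :=
  fun lam i => t ^ (∑ j, γ j * (lam : Fin r → ℤ) j) * x lam i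

/-!
If `t ^ (-k) • v` converges as `t → 0` for some `k > 0`, then `v = t ^ k • (t ^ (-k) • v)` tends to
`0`, so `v = 0`. Hence `⟨γ_j, λ⟩ ≥ 0` for every weight `λ` with `x_λ ≠ 0`. For each such `λ` the
integers `⟨γ_j, λ⟩` sum to `0`, so they all vanish, and every `γ_j(t)` fixes `x_λ`.
-/

section TopologicalModule

open Filter Topology

variable {𝕜 : Type*} [DivisionRing 𝕜] [TopologicalSpace 𝕜] [ContinuousMul 𝕜]
  [(𝓝[≠] (0 : 𝕜)).NeBot]

theorem nonneg_of_tendsto_zpow_smul_nhdsNE_zero {E : Type*} [AddCommGroup E] [Module 𝕜 E]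
    [TopologicalSpace E] [ContinuousSMul 𝕜 E] [T2Space E] {n : ℤ} {v y : E} (hv : v ≠ 0)
    (h : Tendsto (fun t : 𝕜 ↦ t ^ n • v) (𝓝[≠] 0) (𝓝 y)) : 0 ≤ n := by
  by_contra! hn
  obtain ⟨k, rfl⟩ : ∃ k : ℕ, n = -k := Int.exists_eq_neg_ofNat hn.le
  have hk : k ≠ 0 := by lia
  have hpow : Tendsto (fun t : 𝕜 ↦ t ^ k) (𝓝[≠] 0) (𝓝 0) :=
    ((continuous_pow k).tendsto' 0 0 (zero_pow hk)).mono_left nhdsWithin_le_nhds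
  have hcancel : (fun t : 𝕜 ↦ t ^ k • t ^ (-k : ℤ) • v) =ᶠ[𝓝[≠] 0] fun _ ↦ v := by
    filter_upwards [self_mem_nhdsWithin] with t ht
    rw [zpow_neg, zpow_natCast, smul_inv_smul₀ (pow_ne_zero k ht)]
  have hlim : Tendsto (fun _ : 𝕜 ↦ v) (𝓝[≠] 0) (𝓝 0) := by
    simpa only [zero_smul] using (hpow.smul h).congr' hcancel
  exact hv (tendsto_nhds_unique tendsto_const_nhds hlim)

variable {I : Type*} {E : I → Type*} [∀ i, AddCommGroup (E i)] [∀ i, Module 𝕜 (E i)]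

/-- The operator `γ(t)` of a one-parameter subgroup `γ` acting on the product of the spaces `E i`
with weight `w i` on `E i`. A pair of a cocharacter `γ` and a grading by characters `λ i` enters
only through the integers `w i = ⟨γ, λ i⟩`. At `t = 0` it has no meaning if some `w i` is
negative. -/
def weightAct (w : I → ℤ) (t : 𝕜) (x : ∀ i, E i) : ∀ i, E i :=
  fun i ↦ t ^ w i • x i

variable [∀ i, TopologicalSpace (E i)] [∀ i, ContinuousSMul 𝕜 (E i)] [∀ i, T2Space (E i)]

theorem weight_nonneg_of_tendsto_weightAct {w : I → ℤ} {x y : ∀ i, E i} {i : I} (hx : x i ≠ 0)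
    (h : Tendsto (fun t : 𝕜 ↦ weightAct w t x) (𝓝[≠] 0) (𝓝 y)) : 0 ≤ w i :=
  nonneg_of_tendsto_zpow_smul_nhdsNE_zero hx (tendsto_pi_nhds.1 h i)

theorem weight_eq_zero_of_sum_eq_zero_of_tendsto_weightAct {ι : Type*} [Fintype ι]
    {w : ι → I → ℤ} {x : ∀ i, E i} {i : I} (hx : x i ≠ 0) (hsum : ∑ j, w j i = 0)
    (hlim : ∀ j, ∃ y, Tendsto (fun t : 𝕜 ↦ weightAct (w j) t x) (𝓝[≠] 0) (𝓝 y)) (j : ι) :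
    w j i = 0 := by
  have hnonneg : ∀ j, 0 ≤ w j i := by
    intro j
    obtain ⟨y, hy⟩ := hlim j
    exact weight_nonneg_of_tendsto_weightAct hx hy
  exact congrFun ((Fintype.sum_eq_zero_iff_of_nonneg hnonneg).1 hsum) j

theorem stmt_13_general {ι : Type*} [Fintype ι] {w : ι → I → ℤ} {x : ∀ i, E i}
    (hsum : ∑ j, w j = 0)
    (hlim : ∀ j, ∃ y, Tendsto (fun t : 𝕜 ↦ weightAct (w j) t x) (𝓝[≠] 0) (𝓝 y)) :
    ∀ j, ∀ t : 𝕜, t ≠ 0 → weightAct (w j) t x = x := by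
  intro j t _
  funext i
  by_cases hx : x i = 0
  · rw [weightAct, hx, smul_zero]
  · have hsum_i : ∑ j, w j i = 0 := by rw [← Finset.sum_apply, hsum, Pi.zero_apply]
    have hw : w j i = 0 := weight_eq_zero_of_sum_eq_zero_of_tendsto_weightAct hx hsum_i hlim j
    rw [weightAct, hw, zpow_zero, one_smul]

end TopologicalModule

/-- If `γ₁ + ⋯ + γ_m = 0` and for each `j` the limit `lim_{t→0} γ_j(t)x` exists in the
graded vector space `V`, then `x` is fixed by each of the one-parameter subgroups
`γ_j`, i.e. `γ_j(t)x = x` for all `j` and all `t ≠ 0`. -/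
theorem stmt_13 (r : ℕ) (hr : 1 ≤ r) (Λ : Finset (Fin r → ℤ)) (d : (Fin r → ℤ) → ℕ)
    (x : ∀ lam : Λ, Fin (d lam) → ℂ) (m : ℕ) (γs : Fin m → (Fin r → ℤ))
    (hsum : ∑ j, γs j = 0)
    (hlim : ∀ j : Fin m, ∃ y : ∀ lam : Λ, Fin (d lam) → ℂ,
        Filter.Tendsto (fun t : ℂ => wtAct Λ d (γs j) t x)
          (nhdsWithin 0 {(0 : ℂ)}ᶜ) (nhds y)) :
    ∀ j : Fin m, ∀ t : ℂ, t ≠ 0 → wtAct Λ d (γs j) t x = x := by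
  have hweights : ∑ j, (fun lam : Λ ↦ γs j ⬝ᵥ (lam : Fin r → ℤ)) = 0 := by
    funext lam
    rw [Finset.sum_apply, ← sum_dotProduct, hsum, zero_dotProduct, Pi.zero_apply]
  exact stmt_13_general hweights hlim
end
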